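/- Let Ω ⊆ ℝ^n be a bounded open set with Lipschitz boundary and s ∈ (0,1). A measurable set E ⊆ ℝ^n (normalized so that ∂E equals its measure-theoretic boundary) has finite s-perimeter in Ω, i.e. P_s(E,Ω) < ∞, if and only if there exist a sequence of open sets E_h ⊆ ℝ^n with smooth boundary and a sequence ε_h → 0⁺ such that: (i) E_h →loc E and sup_h P_s(E_h,Ω) < ∞; (ii) lim_{h→∞} P_s(E_h,Ω) = P_s(E,Ω); (iii) ∂E_h ∖ N_{ε_h}(∂Ω) ⊆ N_{ε_h}(∂E). -/

import Mathlib

open MeasureTheory Set Filter Topology Metric Bornology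
open scoped ENNReal NNReal symmDiff

noncomputable def Ls (n : ℕ) (s : ℝ) (A B : Set (EuclideanSpace ℝ (Fin n))) : ℝ≥0∞ :=
  ∫⁻ x in A, ∫⁻ y in B, ENNReal.ofReal (dist x y ^ (-((n : ℝ) + s)))

noncomputable def Ps (n : ℕ) (s : ℝ) (E Ω : Set (EuclideanSpace ℝ (Fin n))) : ℝ≥0∞ :=
  Ls n s (E ∩ Ω) (Eᶜ ∩ Ω) + Ls n s (E ∩ Ω) (Eᶜ \ Ω) + Ls n s (E \ Ω) (Eᶜ ∩ Ω)

def LocConv (n : ℕ) (A : ℕ → Set (EuclideanSpace ℝ (Fin n)))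
    (B : Set (EuclideanSpace ℝ (Fin n))) : Prop :=
  ∀ K : Set (EuclideanSpace ℝ (Fin n)), IsBounded K →
    Tendsto (fun h => volume ((A h ∆ B) ∩ K)) atTop (𝓝 0)

def HasSmoothBoundary {n : ℕ} (E : Set (EuclideanSpace ℝ (Fin n))) : Prop :=
  ∃ (f : EuclideanSpace ℝ (Fin n) → ℝ) (t : ℝ), ContDiff ℝ (⊤ : ℕ∞) f ∧
    (∀ x, f x = t → fderiv ℝ f x ≠ 0) ∧ E = {x | t < f x}

def HasLipschitzBoundary {n : ℕ} (Ω : Set (EuclideanSpace ℝ (Fin n))) : Prop :=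
  ∀ x ∈ frontier Ω, ∃ (U : Set (EuclideanSpace ℝ (Fin n)))
    (_ : IsOpen U) (_ : x ∈ U)
    (L : EuclideanSpace ℝ (Fin n) ≃ₗᵢ[ℝ] WithLp 2 (EuclideanSpace ℝ (Fin (n - 1)) × ℝ))
    (φ : EuclideanSpace ℝ (Fin (n - 1)) → ℝ) (K : NNReal),
    LipschitzWith K φ ∧
    Ω ∩ U = {y ∈ U | φ (WithLp.equiv 2 _ (L y)).1 < (WithLp.equiv 2 _ (L y)).2} ∧
    frontier Ω ∩ U = {y ∈ U | φ (WithLp.equiv 2 _ (L y)).1 = (WithLp.equiv 2 _ (L y)).2}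

def mtBoundary {n : ℕ} (E : Set (EuclideanSpace ℝ (Fin n))) : Set (EuclideanSpace ℝ (Fin n)) :=
  {x | ∀ r > 0, 0 < volume (E ∩ Metric.ball x r) ∧
    volume (E ∩ Metric.ball x r) < volume (Metric.ball x r)}

/-!
Only the construction of `E_h` needs work. The indicator of `E` is multiplied by a cutoff vanishing
near `∂Ω` and mollified at a much smaller scale, so that points are never moved across `∂Ω` where
the function is nonzero. The cutoff costs little energy in `Ω` because `s` is smaller than the
codimension of `∂Ω`, and mollification does not increase the energy up to small errors. A small
generic perturbation of the form `a (x / √(1 + ‖x‖²))` makes almost every value regular; this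
elementary substitute for Sard's theorem counts dimensions, because the pairs (perturbation,
critical value) are the image of a set of dimension `n` under a `C¹` map into `ℝ^(n+1)`.

By the nonlocal coarea formula the perimeters in `Ω` of the superlevel sets average to the energy
of the function, while Fatou's lemma bounds their lower limit from below by the perimeter of `E`.
Hence for almost every level in `(0, 1)` the perimeters in `Ω` of the superlevel sets converge to
that of `E` along a subsequence. The interactions across `∂Ω` converge by dominated convergence, as
`L_s(Ω, Ωᶜ) < ∞`, and away from `∂Ω` and `∂E` the approximants are so close to `0` or `1` that their
level sets do not reach there.
-/

/-! ### Crossing the frontier -/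

theorem inter_frontier_nonempty_of_isPreconnected {X : Type*} [TopologicalSpace X] {S A : Set X}
    (hS : IsPreconnected S) (hA : (S ∩ A).Nonempty) (hA' : (S ∩ Aᶜ).Nonempty) :
    (S ∩ frontier A).Nonempty := by
  rw [frontier_eq_closure_inter_closure]
  refine isPreconnected_closed_iff.1 hS _ _ isClosed_closure isClosed_closure (fun x _ => ?_)
    (hA.mono (inter_subset_inter_right _ subset_closure))
    (hA'.mono (inter_subset_inter_right _ subset_closure))
  exact (em (x ∈ A)).imp (subset_closure ·) (subset_closure ·)

theorem exists_mem_frontier_dist_le {X : Type*} [NormedAddCommGroup X] [NormedSpace ℝ X]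
    {A : Set X} {a b : X} (ha : a ∈ A) (hb : b ∉ A) :
    ∃ p ∈ frontier A, dist a p ≤ dist a b ∧ dist b p ≤ dist a b := by
  obtain ⟨p, hp, hpA⟩ := inter_frontier_nonempty_of_isPreconnected
    (convex_segment a b).isPreconnected ⟨a, left_mem_segment ℝ a b, ha⟩
    ⟨b, right_mem_segment ℝ a b, hb⟩
  have hsum := dist_add_dist_of_mem_segment hp
  refine ⟨p, hpA, ?_, ?_⟩
  · linarith [dist_nonneg (x := p) (y := b)]
  · linarith [dist_nonneg (x := a) (y := p), dist_comm b p]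

/-! ### Minkowski content -/

/-- `Γ` has finite upper Minkowski content of codimension `θ`: its `δ`-neighbourhoods have measure
`O(δ ^ θ)`. -/
def FiniteMinkowskiContent {X : Type*} [PseudoEMetricSpace X] [MeasurableSpace X] (μ : Measure X)
    (θ : ℝ) (Γ : Set X) : Prop :=
  ∃ C : ℝ≥0, ∀ δ ∈ Ioc (0 : ℝ) 1, μ (thickening δ Γ) ≤ C * ENNReal.ofReal (δ ^ θ)

namespace FiniteMinkowskiContent

variable {X : Type*} [PseudoEMetricSpace X] [MeasurableSpace X] {μ : Measure X} {θ σ : ℝ}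
  {Γ Γ' : Set X}

theorem empty : FiniteMinkowskiContent μ θ ∅ := ⟨0, by simp⟩

theorem mono (h : FiniteMinkowskiContent μ θ Γ') (hΓ : Γ ⊆ Γ') : FiniteMinkowskiContent μ θ Γ :=
  let ⟨C, hC⟩ := h
  ⟨C, fun δ hδ => (measure_mono (thickening_subset_of_subset δ hΓ)).trans (hC δ hδ)⟩

theorem union (h : FiniteMinkowskiContent μ θ Γ) (h' : FiniteMinkowskiContent μ θ Γ') :
    FiniteMinkowskiContent μ θ (Γ ∪ Γ') := by
  obtain ⟨C, hC⟩ := h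
  obtain ⟨C', hC'⟩ := h'
  refine ⟨C + C', fun δ hδ => ?_⟩
  rw [thickening_union, ENNReal.coe_add, add_mul]
  exact (measure_union_le _ _).trans (add_le_add (hC δ hδ) (hC' δ hδ))

theorem of_isCompact (hΓ : IsCompact Γ)
    (h : ∀ x ∈ Γ, ∃ U ∈ 𝓝 x, FiniteMinkowskiContent μ θ (Γ ∩ U)) :
    FiniteMinkowskiContent μ θ Γ := by
  refine hΓ.induction_on empty (fun _ _ hst ht => ht.mono hst) (fun _ _ hs ht => hs.union ht)
    fun x hx => ?_
  obtain ⟨U, hU, hΓU⟩ := h x hx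
  exact ⟨Γ ∩ U, inter_mem_nhdsWithin _ hU, hΓU⟩

theorem tendsto_measure_thickening_two_mul (h : FiniteMinkowskiContent μ θ Γ) (hσ : σ < θ) :
    Tendsto (fun δ : ℝ => ENNReal.ofReal (δ ^ (-σ)) * μ (thickening (2 * δ) Γ)) (𝓝[>] 0) (𝓝 0) := by
  obtain ⟨C, hC⟩ := h
  have hlim : Tendsto (fun δ : ℝ => C * ENNReal.ofReal (2 ^ θ * δ ^ (θ - σ))) (𝓝[>] 0) (𝓝 0) := by
    have hpow : Tendsto (fun δ : ℝ => 2 ^ θ * δ ^ (θ - σ)) (𝓝[>] 0) (𝓝 0) := by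
      have := (Real.continuousAt_rpow_const 0 (θ - σ) (Or.inr (sub_pos.2 hσ).le)).tendsto
      rw [Real.zero_rpow (sub_pos.2 hσ).ne'] at this
      simpa using (this.mono_left nhdsWithin_le_nhds).const_mul (2 ^ θ)
    simpa using ENNReal.Tendsto.const_mul (ENNReal.tendsto_ofReal hpow)
      (Or.inr ENNReal.coe_ne_top)
  refine tendsto_of_tendsto_of_tendsto_of_le_of_le' tendsto_const_nhds hlim
    (Eventually.of_forall fun _ => zero_le) ?_
  filter_upwards [Ioc_mem_nhdsGT (half_pos one_pos)] with δ hδ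
  have hδ0 : 0 ≤ δ := hδ.1.le
  calc ENNReal.ofReal (δ ^ (-σ)) * μ (thickening (2 * δ) Γ)
      ≤ ENNReal.ofReal (δ ^ (-σ)) * (C * ENNReal.ofReal ((2 * δ) ^ θ)) := by
        gcongr
        exact hC _ ⟨by linarith [hδ.1], by linarith [hδ.2]⟩
    _ = C * ENNReal.ofReal (2 ^ θ * δ ^ (θ - σ)) := by
        rw [mul_left_comm, ← ENNReal.ofReal_mul (by positivity), Real.mul_rpow zero_le_two hδ0,
          sub_eq_add_neg, Real.rpow_add hδ.1, mul_left_comm, mul_comm (δ ^ (-σ))]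

theorem tendsto_measure_thickening (h : FiniteMinkowskiContent μ θ Γ) (hθ : 0 < θ) :
    Tendsto (fun δ : ℝ => μ (thickening δ Γ)) (𝓝[>] 0) (𝓝 0) := by
  refine tendsto_of_tendsto_of_tendsto_of_le_of_le' tendsto_const_nhds
    (by simpa using h.tendsto_measure_thickening_two_mul hθ)
    (Eventually.of_forall fun _ => zero_le) ?_
  filter_upwards [self_mem_nhdsWithin] with δ hδ
  exact measure_mono (thickening_mono (by linarith [mem_Ioi.1 hδ]) _)

theorem measure_eq_zero (h : FiniteMinkowskiContent μ θ Γ) (hθ : 0 < θ) : μ Γ = 0 := by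
  refine le_antisymm (ge_of_tendsto (h.tendsto_measure_thickening hθ) ?_) zero_le
  filter_upwards [self_mem_nhdsWithin] with δ hδ
  exact measure_mono (self_subset_thickening hδ Γ)

end FiniteMinkowskiContent

section Graph

variable {Y : Type*}

theorem measure_prod_setOf_abs_sub_le [MeasurableSpace Y] {ν : Measure Y}
    {φ : Y → ℝ} (hφ : Measurable φ) {B : Set Y} (hB : MeasurableSet B) (c : ℝ) :
    ν.prod volume {q : Y × ℝ | q.1 ∈ B ∧ |q.2 - φ q.1| ≤ c} = ν B * ENNReal.ofReal (2 * c) := by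
  have hslab : MeasurableSet {q : Y × ℝ | q.1 ∈ B ∧ |q.2 - φ q.1| ≤ c} :=
    (measurable_fst hB).inter (measurableSet_le
      (measurable_snd.sub (hφ.comp measurable_fst)).norm measurable_const)
  have hsection : ∀ y, volume (Prod.mk y ⁻¹' {q : Y × ℝ | q.1 ∈ B ∧ |q.2 - φ q.1| ≤ c})
      = B.indicator (fun _ => ENNReal.ofReal (2 * c)) y := fun y => by
    by_cases hy : y ∈ B
    · have : Prod.mk y ⁻¹' {q : Y × ℝ | q.1 ∈ B ∧ |q.2 - φ q.1| ≤ c} = closedBall (φ y) c := by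
        ext t; simp [hy, Real.dist_eq]
      rw [this, Real.volume_closedBall, indicator_of_mem hy]
    · simp [hy]
  rw [Measure.prod_apply hslab, lintegral_congr hsection, lintegral_indicator_const hB, mul_comm]

variable [PseudoMetricSpace Y]

theorem thickening_graph_subset {X : Type*} [PseudoMetricSpace X] {p : X → Y} {q : X → ℝ}
    (hp : LipschitzWith 1 p) (hq : LipschitzWith 1 q) {φ : Y → ℝ} {K : ℝ≥0}
    (hφ : LipschitzWith K φ) {Γ : Set X} (hΓ : ∀ x ∈ Γ, q x = φ (p x)) (δ : ℝ) :
    thickening δ Γ ⊆ {x | |q x - φ (p x)| ≤ (1 + K) * δ} := by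
  intro x hx
  obtain ⟨z, hz, hxz⟩ := mem_thickening_iff.1 hx
  have hlip : LipschitzWith (1 + K) fun x => q x - φ (p x) := by
    simpa using hq.sub (hφ.comp hp)
  calc |q x - φ (p x)| = dist (q x - φ (p x)) (q z - φ (p z)) := by
        rw [hΓ z hz, sub_self, Real.dist_0_eq_abs]
    _ ≤ (1 + K) * dist x z := by exact_mod_cast hlip.dist_le_mul x z
    _ ≤ (1 + K) * δ := by gcongr

theorem FiniteMinkowskiContent.of_lipschitz_graph [ProperSpace Y] [MeasurableSpace Y]
    [OpensMeasurableSpace Y] {X : Type*} [PseudoMetricSpace X] [MeasurableSpace X]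
    {μ : Measure X} {ν : Measure Y} [IsFiniteMeasureOnCompacts ν] {p : X → Y} {q : X → ℝ}
    (hp : LipschitzWith 1 p) (hq : LipschitzWith 1 q)
    (hpq : MeasurePreserving (fun x => (p x, q x)) μ (ν.prod volume)) {φ : Y → ℝ} {K : ℝ≥0}
    (hφ : LipschitzWith K φ) {Γ : Set X} (hΓ : ∀ x ∈ Γ, q x = φ (p x)) {x₀ : X} {r : ℝ}
    (hΓr : Γ ⊆ ball x₀ r) :
    FiniteMinkowskiContent μ 1 Γ := by
  set B := closedBall (p x₀) (r + 1)
  refine ⟨(ν B).toNNReal * (2 * (1 + K)), fun δ hδ => ?_⟩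
  have hsub : thickening δ Γ ⊆
      (fun x => (p x, q x)) ⁻¹' {y | y.1 ∈ B ∧ |y.2 - φ y.1| ≤ (1 + K) * δ} := fun x hx => by
    refine ⟨?_, thickening_graph_subset hp hq hφ hΓ δ hx⟩
    obtain ⟨z, hz, hxz⟩ := mem_thickening_iff.1 hx
    calc dist (p x) (p x₀) ≤ dist x x₀ := by simpa using hp.dist_le_mul x x₀
      _ ≤ dist x z + dist z x₀ := dist_triangle _ _ _
      _ ≤ r + 1 := by linarith [mem_ball.1 (hΓr hz), hδ.2]
  calc μ (thickening δ Γ)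
      ≤ ν.prod volume {y : Y × ℝ | y.1 ∈ B ∧ |y.2 - φ y.1| ≤ (1 + K) * δ} :=
        (measure_mono hsub).trans (hpq.measure_preimage_le _)
    _ = ν B * ENNReal.ofReal (2 * ((1 + K) * δ)) :=
        measure_prod_setOf_abs_sub_le hφ.continuous.measurable isClosed_closedBall.measurableSet _
    _ = ((ν B).toNNReal * (2 * (1 + K)) : ℝ≥0) * ENNReal.ofReal (δ ^ (1 : ℝ)) := by
        have hνB : ν B ≠ ⊤ := (isCompact_closedBall _ _).measure_lt_top.ne
        have hcoe : (2 * (1 + K) : ℝ) = ((2 * (1 + K) : ℝ≥0) : ℝ) := by push_cast; rfl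
        rw [← mul_assoc, ENNReal.ofReal_mul (by positivity), hcoe, ENNReal.ofReal_coe_nnreal,
          Real.rpow_one, ENNReal.coe_mul (ν B).toNNReal, ENNReal.coe_toNNReal hνB, mul_assoc]

end Graph

theorem HasLipschitzBoundary.finiteMinkowskiContent {n : ℕ} {Ω : Set (EuclideanSpace ℝ (Fin n))}
    (hΩ : HasLipschitzBoundary Ω) (hb : IsBounded Ω) :
    FiniteMinkowskiContent volume 1 (frontier Ω) := by
  have hcompact : IsCompact (frontier Ω) :=
    Metric.isCompact_of_isClosed_isBounded isClosed_frontier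
      (hb.closure.subset frontier_subset_closure)
  refine .of_isCompact hcompact fun x hx => ?_
  obtain ⟨U, hU, hxU, L, φ, K, hφ, -, hgraph⟩ := hΩ x hx
  obtain ⟨r, hr, hrU⟩ := Metric.isOpen_iff.1 hU x hxU
  have hofLp : LipschitzWith 1 (WithLp.ofLp ∘ L) :=
    one_mul (1 : ℝ≥0) ▸ (WithLp.prod_lipschitzWith_ofLp 2 _ _).comp L.lipschitz
  refine ⟨ball x r, ball_mem_nhds x hr, .of_lipschitz_graph (p := fun y => (L y).fst)
    (q := fun y => (L y).snd) (ν := volume) (φ := φ) ?_ ?_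
    ((WithLp.volume_preserving_ofLp _ _).comp L.measurePreserving) hφ (fun y hy => ?_)
    inter_subset_right⟩
  · exact one_mul (1 : ℝ≥0) ▸ LipschitzWith.prod_fst.comp hofLp
  · exact one_mul (1 : ℝ≥0) ▸ LipschitzWith.prod_snd.comp hofLp
  · have : y ∈ frontier Ω ∩ U := ⟨hy.1, hrU hy.2⟩
    rw [hgraph] at this
    exact this.2.symm

/-! ### Nonlocal perimeter and variation -/

section NonlocalVariation

variable {X : Type*} [MeasurableSpace X] (m : Measure (X × X))

/-- The perimeter of `A` with respect to an interaction `m`: the amount of interaction of `A` with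
its complement. The main contribution to the fractional perimeter in `Ω` is the case of the
kernel `|x - y| ^ (-(n + s))` on `Ω × Ω`. -/
noncomputable def nonlocalPerimeter (A : Set X) : ℝ≥0∞ := m (A ×ˢ Aᶜ)

/-- The variation of `f` with respect to an interaction `m`, which extends `nonlocalPerimeter` from
sets to functions. Only the positive part of the increments is counted. -/
noncomputable def nonlocalVariation (f : X → ℝ) : ℝ≥0∞ :=
  ∫⁻ p, ENNReal.ofReal (f p.1 - f p.2) ∂m

variable {m}

theorem nonlocalVariation_indicator {A : Set X} (hA : MeasurableSet A) :
    nonlocalVariation m (A.indicator 1) = nonlocalPerimeter m A := by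
  have hpt : ∀ p : X × X, ENNReal.ofReal (A.indicator 1 p.1 - A.indicator 1 p.2)
      = (A ×ˢ Aᶜ).indicator 1 p := fun p => by
    by_cases h₁ : p.1 ∈ A <;> by_cases h₂ : p.2 ∈ A <;> simp [h₁, h₂]
  rw [nonlocalVariation, lintegral_congr hpt, lintegral_indicator_one (hA.prod hA.compl),
    nonlocalPerimeter]

theorem nonlocalVariation_add_le {f g : X → ℝ} (hf : Measurable f) :
    nonlocalVariation m (f + g) ≤ nonlocalVariation m f + nonlocalVariation m g := by
  simp only [nonlocalVariation]
  rw [← lintegral_add_left (by fun_prop)]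
  refine lintegral_mono fun p => ?_
  rw [Pi.add_apply, Pi.add_apply, add_sub_add_comm]
  exact ENNReal.ofReal_add_le

theorem nonlocalVariation_mul_le {f g : X → ℝ} (hf : Measurable f)
    (hf₀₁ : ∀ x, f x ∈ Icc 0 1) (hg₀₁ : ∀ x, g x ∈ Icc 0 1) :
    nonlocalVariation m (f * g) ≤ nonlocalVariation m f + nonlocalVariation m g := by
  have scale : ∀ {c a : ℝ}, c ∈ Icc 0 1 → ENNReal.ofReal (c * a) ≤ ENNReal.ofReal a :=
    fun {c a} hc => by
      rw [ENNReal.ofReal_mul hc.1]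
      exact mul_le_of_le_one_left' (ENNReal.ofReal_le_one.2 hc.2)
  simp only [nonlocalVariation]
  rw [← lintegral_add_left (by fun_prop)]
  refine lintegral_mono fun p => ?_
  calc ENNReal.ofReal ((f * g) p.1 - (f * g) p.2)
      = ENNReal.ofReal (g p.2 * (f p.1 - f p.2) + f p.1 * (g p.1 - g p.2)) := by
        congr 1; simp only [Pi.mul_apply]; ring
    _ ≤ ENNReal.ofReal (g p.2 * (f p.1 - f p.2)) + ENNReal.ofReal (f p.1 * (g p.1 - g p.2)) :=
        ENNReal.ofReal_add_le
    _ ≤ _ := add_le_add (scale (hg₀₁ _)) (scale (hf₀₁ _))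

theorem ofReal_integral_le_lintegral_ofReal {α : Type*} [MeasurableSpace α] {μ : Measure α}
    (f : α → ℝ) : ENNReal.ofReal (∫ x, f x ∂μ) ≤ ∫⁻ x, ENNReal.ofReal (f x) ∂μ := by
  by_cases hf : Integrable f μ
  · rw [integral_eq_lintegral_pos_part_sub_lintegral_neg_part hf]
    exact (ENNReal.ofReal_le_ofReal (sub_le_self _ ENNReal.toReal_nonneg)).trans
      ENNReal.ofReal_toReal_le
  · simp [integral_undef hf]

open scoped Convolution in
theorem nonlocalVariation_convolution_le [AddGroup X] [MeasurableAdd₂ X] [MeasurableNeg X]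
    [SFinite m] {μ : Measure X} [SFinite μ] {e w : X → ℝ} (he : Integrable e μ) (he₀ : 0 ≤ e)
    (hw : Measurable w) {c : ℝ} (hc : ∀ x, |w x| ≤ c) :
    nonlocalVariation m (e ⋆[ContinuousLinearMap.lsmul ℝ ℝ, μ] w) ≤
      ∫⁻ z, ENNReal.ofReal (e z) * nonlocalVariation m (fun x => w (x - z)) ∂μ := by
  have hint : ∀ x, Integrable (fun z => e z * w (x - z)) μ := fun x =>
    he.mul_bdd (c := c) (Measurable.aestronglyMeasurable (by fun_prop))
      (Eventually.of_forall fun z => hc _)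
  have hmeas : AEMeasurable (fun q : (X × X) × X =>
      ENNReal.ofReal (e q.2) * ENNReal.ofReal (w (q.1.1 - q.2) - w (q.1.2 - q.2))) (m.prod μ) := by
    have he' : AEMeasurable (fun q : (X × X) × X => e q.2) (m.prod μ) :=
      he.aemeasurable.comp_quasiMeasurePreserving Measure.quasiMeasurePreserving_snd
    have hw' : Measurable fun q : (X × X) × X => w (q.1.1 - q.2) - w (q.1.2 - q.2) := by fun_prop
    exact he'.ennreal_ofReal.mul hw'.ennreal_ofReal.aemeasurable
  have jensen : ∀ x y, ENNReal.ofReal ((e ⋆[ContinuousLinearMap.lsmul ℝ ℝ, μ] w) x -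
      (e ⋆[ContinuousLinearMap.lsmul ℝ ℝ, μ] w) y) ≤
      ∫⁻ z, ENNReal.ofReal (e z) * ENNReal.ofReal (w (x - z) - w (y - z)) ∂μ := fun x y => by
    simp only [convolution, ContinuousLinearMap.lsmul_apply, smul_eq_mul]
    rw [← integral_sub (hint x) (hint y)]
    refine (ofReal_integral_le_lintegral_ofReal _).trans_eq (lintegral_congr fun z => ?_)
    rw [← mul_sub, ENNReal.ofReal_mul (he₀ z)]
  calc nonlocalVariation m (e ⋆[ContinuousLinearMap.lsmul ℝ ℝ, μ] w)
      ≤ ∫⁻ p, ∫⁻ z, ENNReal.ofReal (e z) * ENNReal.ofReal (w (p.1 - z) - w (p.2 - z)) ∂μ ∂m :=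
        lintegral_mono fun p => jensen p.1 p.2
    _ = ∫⁻ z, ENNReal.ofReal (e z) * nonlocalVariation m (fun x => w (x - z)) ∂μ := by
        rw [lintegral_lintegral_swap hmeas]
        exact lintegral_congr fun z => lintegral_const_mul _ (by fun_prop)

/-! ### Coarea formula -/

theorem measurableSet_prod_subgraph {v : X → ℝ} (hv : Measurable v) :
    MeasurableSet {q : ℝ × X × X | q.2 ∈ {x | q.1 < v x} ×ˢ {x | q.1 < v x}ᶜ} := by
  have h₁ : MeasurableSet {q : ℝ × X × X | q.1 < v q.2.1} :=
    measurableSet_lt (by fun_prop) (by fun_prop)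
  have h₂ : MeasurableSet {q : ℝ × X × X | q.1 < v q.2.2} :=
    measurableSet_lt (by fun_prop) (by fun_prop)
  exact h₁.inter h₂.compl

theorem measurable_nonlocalPerimeter_superlevel [SFinite m] {v : X → ℝ} (hv : Measurable v) :
    Measurable fun t => nonlocalPerimeter m {x | t < v x} :=
  measurable_measure_prodMk_left (measurableSet_prod_subgraph hv)

theorem lintegral_nonlocalPerimeter_superlevel [SFinite m] {v : X → ℝ} (hv : Measurable v) :
    ∫⁻ t, nonlocalPerimeter m {x | t < v x} = nonlocalVariation m v := by
  have hS := measurableSet_prod_subgraph hv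
  calc ∫⁻ t, nonlocalPerimeter m {x | t < v x}
      = (volume.prod m) {q : ℝ × X × X | q.2 ∈ {x | q.1 < v x} ×ˢ {x | q.1 < v x}ᶜ} :=
        (Measure.prod_apply hS).symm
    _ = ∫⁻ p, volume (Ico (v p.2) (v p.1)) ∂m := by
        rw [Measure.prod_apply_symm hS]
        refine lintegral_congr fun p => congrArg _ ?_
        ext t
        simp [and_comm]
    _ = nonlocalVariation m v := by simp only [Real.volume_Ico, nonlocalVariation]

/-! ### Convergence of superlevel sets -/

theorem measure_le_liminf_of_ae_eventually_mem {α : Type*} [MeasurableSpace α] {μ : Measure α}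
    {A : ℕ → Set α} {B : Set α} (hA : ∀ k, MeasurableSet (A k)) (hB : MeasurableSet B)
    (h : ∀ᵐ x ∂μ, x ∈ B → ∀ᶠ k in atTop, x ∈ A k) :
    μ B ≤ liminf (fun k => μ (A k)) atTop := by
  simp_rw [← lintegral_indicator_one hB, ← lintegral_indicator_one (hA _)]
  refine le_trans (lintegral_mono_ae ?_)
    (lintegral_liminf_le fun k => measurable_one.indicator (hA k))
  filter_upwards [h] with x hx
  by_cases hxB : x ∈ B
  · refine le_liminf_of_le (by isBoundedDefault) ?_
    filter_upwards [hx hxB] with k hk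
    simp [hxB, hk]
  · simp [hxB]

theorem eventually_lt_iff_mem_of_tendsto_indicator {α : Type*} {v : ℕ → α → ℝ} {A : Set α}
    {x : α} {t : ℝ} (h : Tendsto (v · x) atTop (𝓝 (A.indicator 1 x))) (ht : t ∈ Ioo 0 1) :
    ∀ᶠ k in atTop, t < v k x ↔ x ∈ A := by
  by_cases hx : x ∈ A
  · rw [indicator_of_mem hx, Pi.one_apply] at h
    filter_upwards [h.eventually_const_lt ht.2] with k hk using iff_of_true hk hx
  · rw [indicator_of_notMem hx] at h
    filter_upwards [h.eventually_le_const ht.1] with k hk using iff_of_false hk.not_gt hx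

/-- `v k x → 1_A(x)` and `v k y → 1_A(y)` for `m`-almost every pair `(x, y)`. -/
def PairwiseAETendstoIndicator (m : Measure (X × X)) (v : ℕ → X → ℝ) (A : Set X) : Prop :=
  ∀ᵐ p ∂m, Tendsto (v · p.1) atTop (𝓝 (A.indicator 1 p.1)) ∧
    Tendsto (v · p.2) atTop (𝓝 (A.indicator 1 p.2))

theorem nonlocalPerimeter_le_liminf_superlevel {v : ℕ → X → ℝ} (hv : ∀ k, Measurable (v k))
    {A : Set X} (hA : MeasurableSet A) (hvA : PairwiseAETendstoIndicator m v A) {t : ℝ}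
    (ht : t ∈ Ioo 0 1) :
    nonlocalPerimeter m A ≤ liminf (fun k => nonlocalPerimeter m {x | t < v k x}) atTop := by
  have hmeas : ∀ k, MeasurableSet {x | t < v k x} := fun k =>
    measurableSet_lt measurable_const (hv k)
  refine measure_le_liminf_of_ae_eventually_mem (fun k => (hmeas k).prod (hmeas k).compl)
    (hA.prod hA.compl) (hvA.mono fun p hp hpA => ?_)
  filter_upwards [eventually_lt_iff_mem_of_tendsto_indicator hp.1 ht,
    eventually_lt_iff_mem_of_tendsto_indicator hp.2 ht] with k h₁ h₂
  exact ⟨h₁.2 hpA.1, fun h => hpA.2 (h₂.1 h)⟩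

/-- By the coarea formula the perimeters of the superlevel sets average to the variation, while by
Fatou's lemma almost none of their lower limits is below the perimeter of `A`. -/
theorem ae_liminf_nonlocalPerimeter_superlevel_eq [SFinite m] {v : ℕ → X → ℝ}
    (hv : ∀ k, Measurable (v k)) {A : Set X} (hA : MeasurableSet A)
    (hvA : PairwiseAETendstoIndicator m v A) (hAfin : nonlocalPerimeter m A < ⊤)
    (hvar : liminf (fun k => nonlocalVariation m (v k)) atTop ≤ nonlocalPerimeter m A) :
    ∀ᵐ t ∂volume.restrict (Ioo (0 : ℝ) 1),
      liminf (fun k => nonlocalPerimeter m {x | t < v k x}) atTop = nonlocalPerimeter m A := by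
  have hper := fun k => measurable_nonlocalPerimeter_superlevel (m := m) (hv k)
  have hconst : ∫⁻ _ in Ioo (0 : ℝ) 1, nonlocalPerimeter m A = nonlocalPerimeter m A := by simp
  refine EventuallyEq.symm (ae_eq_of_ae_le_of_lintegral_le ?_ (hconst.trans_lt hAfin).ne
    (Measurable.liminf hper).aemeasurable ?_)
  · filter_upwards [ae_restrict_mem measurableSet_Ioo] with t ht
    exact nonlocalPerimeter_le_liminf_superlevel hv hA hvA ht
  · calc ∫⁻ t in Ioo (0 : ℝ) 1, liminf (fun k => nonlocalPerimeter m {x | t < v k x}) atTop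
        ≤ liminf (fun k => ∫⁻ t in Ioo (0 : ℝ) 1, nonlocalPerimeter m {x | t < v k x}) atTop :=
          lintegral_liminf_le hper
      _ ≤ liminf (fun k => nonlocalVariation m (v k)) atTop := by
          refine liminf_le_liminf (Eventually.of_forall fun k => ?_)
          rw [← lintegral_nonlocalPerimeter_superlevel (hv k)]
          exact setLIntegral_le_lintegral _ _
      _ ≤ ∫⁻ _ in Ioo (0 : ℝ) 1, nonlocalPerimeter m A := hvar.trans_eq hconst.symm

theorem exists_tendsto_nonlocalPerimeter_superlevel [SFinite m] {v : ℕ → X → ℝ}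
    (hv : ∀ k, Measurable (v k)) {A : Set X} (hA : MeasurableSet A)
    (hvA : PairwiseAETendstoIndicator m v A) (hAfin : nonlocalPerimeter m A < ⊤)
    (hvar : liminf (fun k => nonlocalVariation m (v k)) atTop ≤ nonlocalPerimeter m A)
    {P : ℝ → Prop} (hP : ∀ᵐ t, P t) :
    ∃ t ∈ Ioo (0 : ℝ) 1, P t ∧ ∃ φ : ℕ → ℕ, Tendsto φ atTop atTop ∧
      Tendsto (fun j => nonlocalPerimeter m {x | t < v (φ j) x}) atTop
        (𝓝 (nonlocalPerimeter m A)) := by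
  have hne : (ae (volume.restrict (Ioo (0 : ℝ) 1))).NeBot :=
    ae_neBot.2 (by simp [Measure.restrict_eq_zero])
  obtain ⟨t, ht, htP, ht01⟩ :=
    ((ae_liminf_nonlocalPerimeter_superlevel_eq hv hA hvA hAfin hvar).and
      ((ae_restrict_of_ae hP).and (ae_restrict_mem measurableSet_Ioo))).exists
  obtain ⟨φ, hφ, hφ_top⟩ := exists_seq_tendsto_liminf (f := atTop)
    (u := fun k => nonlocalPerimeter m {x | t < v k x})
  exact ⟨t, ht01, htP, φ, hφ_top, ht ▸ hφ⟩

end NonlocalVariation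

/-! ### The Riesz interaction -/

section RieszMeasure

variable {X : Type*} [NormedAddCommGroup X] [MeasurableSpace X]

/-- The measure on `X × X` with density `|x - y| ^ β` with respect to `μ × μ`. The interaction
`L_s` of the fractional perimeter is its value on rectangles for `β = -(n + s)`. The junk value
`0 ^ β = 0` for `β < 0` only concerns the diagonal. -/
noncomputable def rieszMeasure (μ : Measure X) (β : ℝ) : Measure (X × X) :=
  (μ.prod μ).withDensity fun p => ENNReal.ofReal (dist p.1 p.2 ^ β)

theorem rieszMeasure_restrict_absolutelyContinuous {μ : Measure X} {β : ℝ} (S : Set (X × X)) :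
    (rieszMeasure μ β).restrict S ≪ μ.prod μ :=
  Measure.restrict_le_self.absolutelyContinuous.trans (withDensity_absolutelyContinuous _ _)

instance {μ : Measure X} [SFinite μ] {β : ℝ} : SFinite (rieszMeasure μ β) :=
  inferInstanceAs (SFinite ((μ.prod μ).withDensity _))

variable [BorelSpace X] [SecondCountableTopology X] {μ : Measure X} {β : ℝ}

theorem measurable_rieszKernel :
    Measurable fun p : X × X => ENNReal.ofReal (dist p.1 p.2 ^ β) := by fun_prop

theorem lintegral_rieszMeasure {F : X × X → ℝ≥0∞} (hF : Measurable F) :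
    ∫⁻ p, F p ∂rieszMeasure μ β =
      ∫⁻ p, ENNReal.ofReal (dist p.1 p.2 ^ β) * F p ∂μ.prod μ :=
  lintegral_withDensity_eq_lintegral_mul _ measurable_rieszKernel hF

theorem rieszMeasure_inter_le_dist_le {δ : ℝ} (hδ : 0 < δ) (hβ : β ≤ 0) {S : Set (X × X)}
    (hS : MeasurableSet S) :
    rieszMeasure μ β (S ∩ {p | δ ≤ dist p.1 p.2}) ≤ ENNReal.ofReal (δ ^ β) * μ.prod μ S := by
  have hfar : MeasurableSet (S ∩ {p : X × X | δ ≤ dist p.1 p.2}) :=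
    hS.inter (measurableSet_le measurable_const measurable_dist)
  rw [rieszMeasure, withDensity_apply _ hfar]
  calc ∫⁻ p in S ∩ {p | δ ≤ dist p.1 p.2}, ENNReal.ofReal (dist p.1 p.2 ^ β) ∂μ.prod μ
      ≤ ∫⁻ _ in S ∩ {p | δ ≤ dist p.1 p.2}, ENNReal.ofReal (δ ^ β) ∂μ.prod μ :=
        setLIntegral_mono' hfar fun p hp =>
          ENNReal.ofReal_le_ofReal (Real.rpow_le_rpow_of_nonpos hδ hp.2 hβ)
    _ ≤ ENNReal.ofReal (δ ^ β) * μ.prod μ S := by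
        rw [setLIntegral_const]
        gcongr
        exact inter_subset_left

variable [SFinite μ]

theorem rieszMeasure_prod {A B : Set X} (hA : MeasurableSet A) (hB : MeasurableSet B) :
    rieszMeasure μ β (A ×ˢ B) = ∫⁻ x in A, ∫⁻ y in B, ENNReal.ofReal (dist x y ^ β) ∂μ ∂μ := by
  rw [rieszMeasure, withDensity_apply _ (hA.prod hB), ← Measure.prod_restrict,
    lintegral_prod _ measurable_rieszKernel.aemeasurable]

theorem measurePreserving_swap_rieszMeasure :
    MeasurePreserving Prod.swap (rieszMeasure μ β) (rieszMeasure μ β) := by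
  refine ⟨measurable_swap, Measure.ext fun S hS => ?_⟩
  rw [Measure.map_apply measurable_swap hS, rieszMeasure, withDensity_apply _ (measurable_swap hS),
    withDensity_apply _ hS,
    ← Measure.measurePreserving_swap.setLIntegral_comp_preimage hS measurable_rieszKernel]
  simp only [Prod.fst_swap, Prod.snd_swap, dist_comm]

theorem rieszMeasure_prod_comm {A B : Set X} (hA : MeasurableSet A) (hB : MeasurableSet B) :
    rieszMeasure μ β (A ×ˢ B) = rieszMeasure μ β (B ×ˢ A) := by
  rw [← measurePreserving_swap_rieszMeasure.measure_preimage (hB.prod hA).nullMeasurableSet,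
    preimage_swap_prod]

variable [μ.IsAddLeftInvariant]

theorem measurePreserving_sub_sub_rieszMeasure (z : X) :
    MeasurePreserving (fun p : X × X => (p.1 - z, p.2 - z))
      (rieszMeasure μ β) (rieszMeasure μ β) := by
  have hsub : MeasurePreserving (fun p : X × X => (p.1 - z, p.2 - z)) (μ.prod μ) (μ.prod μ) :=
    (measurePreserving_sub_right μ z).prod (measurePreserving_sub_right μ z)
  refine ⟨hsub.measurable, Measure.ext fun S hS => ?_⟩
  rw [Measure.map_apply hsub.measurable hS, rieszMeasure,
    withDensity_apply _ (hsub.measurable hS), withDensity_apply _ hS,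
    ← hsub.setLIntegral_comp_preimage hS measurable_rieszKernel]
  simp only [dist_sub_right]

variable [μ.IsNegInvariant]

theorem rieszMeasure_eq_lintegral {S : Set (X × X)} (hS : MeasurableSet S) :
    rieszMeasure μ β S = ∫⁻ h, ENNReal.ofReal (‖h‖ ^ β) * μ {x | (x, x - h) ∈ S} ∂μ := by
  have hF : Measurable fun p : X × X =>
      ENNReal.ofReal (‖p.2‖ ^ β) * S.indicator 1 (p.1, p.1 - p.2) := by
    have : Measurable (S.indicator (1 : X × X → ℝ≥0∞)) := measurable_one.indicator hS
    fun_prop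
  calc rieszMeasure μ β S
      = ∫⁻ x, ∫⁻ y, ENNReal.ofReal (dist x y ^ β) * S.indicator 1 (x, y) ∂μ ∂μ := by
        have hind : Measurable (S.indicator (1 : X × X → ℝ≥0∞)) := measurable_one.indicator hS
        rw [← lintegral_indicator_one hS, lintegral_rieszMeasure hind]
        exact lintegral_prod _ (measurable_rieszKernel.mul hind).aemeasurable
    _ = ∫⁻ x, ∫⁻ h, ENNReal.ofReal (‖h‖ ^ β) * S.indicator 1 (x, x - h) ∂μ ∂μ := by
        refine lintegral_congr fun x => ?_
        rw [← lintegral_sub_left_eq_self _ x]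
        simp
    _ = ∫⁻ h, ENNReal.ofReal (‖h‖ ^ β) * μ {x | (x, x - h) ∈ S} ∂μ := by
        rw [lintegral_lintegral_swap hF.aemeasurable]
        refine lintegral_congr fun h => ?_
        have hSh : MeasurableSet {x | (x, x - h) ∈ S} := by
          have : Measurable fun x : X => (x, x - h) := by fun_prop
          exact this hS
        rw [lintegral_const_mul' _ _ ENNReal.ofReal_ne_top, ← lintegral_indicator_one hSh]
        rfl

theorem rieszMeasure_fst_mem_sub_mem {A T : Set X} (hA : MeasurableSet A) (hT : MeasurableSet T) :
    rieszMeasure μ β {p | p.1 ∈ A ∧ p.1 - p.2 ∈ T} =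
      (∫⁻ h in T, ENNReal.ofReal (‖h‖ ^ β) ∂μ) * μ A := by
  have hS : MeasurableSet {p : X × X | p.1 ∈ A ∧ p.1 - p.2 ∈ T} :=
    (measurable_fst hA).inter ((measurable_fst.sub measurable_snd) hT)
  rw [rieszMeasure_eq_lintegral hS, ← lintegral_mul_const _ (by fun_prop),
    ← lintegral_indicator hT]
  refine lintegral_congr fun h => ?_
  by_cases hh : h ∈ T <;> simp [hh]

theorem rieszMeasure_fst_mem_or_snd_mem_dist_lt_le {A : Set X} (hA : MeasurableSet A) (R : ℝ) :
    rieszMeasure μ β {p | (p.1 ∈ A ∨ p.2 ∈ A) ∧ dist p.1 p.2 < R} ≤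
      2 * ((∫⁻ h in ball 0 R, ENNReal.ofReal (‖h‖ ^ β) ∂μ) * μ A) := by
  set S : Set (X × X) := {p | p.1 ∈ A ∧ p.1 - p.2 ∈ ball 0 R}
  have hS : MeasurableSet S :=
    (measurable_fst hA).inter ((measurable_fst.sub measurable_snd) measurableSet_ball)
  have hsub : {p : X × X | (p.1 ∈ A ∨ p.2 ∈ A) ∧ dist p.1 p.2 < R} ⊆ S ∪ Prod.swap ⁻¹' S := by
    rintro ⟨x, y⟩ ⟨hx | hy, hxy⟩
    · exact Or.inl ⟨hx, by rwa [mem_ball_zero_iff, ← dist_eq_norm]⟩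
    · exact Or.inr ⟨hy, by rwa [mem_ball_zero_iff, ← dist_eq_norm, dist_comm]⟩
  calc rieszMeasure μ β {p | (p.1 ∈ A ∨ p.2 ∈ A) ∧ dist p.1 p.2 < R}
      ≤ rieszMeasure μ β S + rieszMeasure μ β (Prod.swap ⁻¹' S) :=
        (measure_mono hsub).trans (measure_union_le _ _)
    _ = 2 * rieszMeasure μ β S := by
        rw [measurePreserving_swap_rieszMeasure.measure_preimage hS.nullMeasurableSet, two_mul]
    _ = _ := by rw [rieszMeasure_fst_mem_sub_mem hA measurableSet_ball]

end RieszMeasure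

section HolderVariation

variable {X : Type*} [NormedAddCommGroup X] [MeasurableSpace X] [BorelSpace X]
  [SecondCountableTopology X] {μ : Measure X} {β σ : ℝ}

theorem setLIntegral_dist_rpow_rieszMeasure_le {S : Set (X × X)} (hS : MeasurableSet S) :
    ∫⁻ p in S, ENNReal.ofReal (dist p.1 p.2 ^ σ) ∂rieszMeasure μ β ≤ rieszMeasure μ (β + σ) S := by
  rw [rieszMeasure, restrict_withDensity hS,
    lintegral_withDensity_eq_lintegral_mul _ measurable_rieszKernel measurable_rieszKernel,
    rieszMeasure, withDensity_apply _ hS]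
  refine lintegral_mono fun p => ?_
  rw [Pi.mul_apply, ← ENNReal.ofReal_mul (by positivity)]
  exact ENNReal.ofReal_le_ofReal (Real.le_rpow_add dist_nonneg β σ)

theorem nonlocalVariation_rieszMeasure_restrict_le [SFinite μ] [μ.IsAddLeftInvariant]
    [μ.IsNegInvariant] {Ω N : Set X} (hΩ : MeasurableSet Ω) (hN : MeasurableSet N) {f : X → ℝ}
    {M R : ℝ} (hM : 0 ≤ M) (hf : ∀ x ∈ Ω, ∀ y ∈ Ω, f x - f y ≤ M * dist x y ^ σ)
    (hfN : ∀ x ∈ Ω \ N, ∀ y ∈ Ω \ N, f x ≤ f y) (hR : ∀ x ∈ Ω, ∀ y ∈ Ω, dist x y < R) :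
    nonlocalVariation ((rieszMeasure μ β).restrict (Ω ×ˢ Ω)) f ≤
      ENNReal.ofReal M * (2 * ((∫⁻ h in ball 0 R, ENNReal.ofReal (‖h‖ ^ (β + σ)) ∂μ) * μ N)) := by
  set S : Set (X × X) := {p | (p.1 ∈ N ∨ p.2 ∈ N) ∧ dist p.1 p.2 < R}
  have hS : MeasurableSet S := ((measurable_fst hN).union (measurable_snd hN)).inter
    (measurableSet_lt measurable_dist measurable_const)
  have hpt : ∀ p ∈ Ω ×ˢ Ω, ENNReal.ofReal (f p.1 - f p.2) ≤
      S.indicator (fun p => ENNReal.ofReal M * ENNReal.ofReal (dist p.1 p.2 ^ σ)) p := by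
    rintro ⟨x, y⟩ ⟨hx, hy⟩
    by_cases hp : x ∈ N ∨ y ∈ N
    · rw [indicator_of_mem (show (x, y) ∈ S from ⟨hp, hR x hx y hy⟩), ← ENNReal.ofReal_mul hM]
      exact ENNReal.ofReal_le_ofReal (hf x hx y hy)
    · rw [not_or] at hp
      exact (ENNReal.ofReal_of_nonpos (sub_nonpos.2 (hfN x ⟨hx, hp.1⟩ y ⟨hy, hp.2⟩))).trans_le
        zero_le
  calc nonlocalVariation ((rieszMeasure μ β).restrict (Ω ×ˢ Ω)) f
      ≤ ∫⁻ p in Ω ×ˢ Ω, S.indicator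
          (fun p => ENNReal.ofReal M * ENNReal.ofReal (dist p.1 p.2 ^ σ)) p ∂rieszMeasure μ β :=
        setLIntegral_mono' (hΩ.prod hΩ) hpt
    _ ≤ ∫⁻ p in S, ENNReal.ofReal M * ENNReal.ofReal (dist p.1 p.2 ^ σ) ∂rieszMeasure μ β := by
        rw [← lintegral_indicator hS]
        exact setLIntegral_le_lintegral _ _
    _ ≤ ENNReal.ofReal M * rieszMeasure μ (β + σ) S := by
        rw [lintegral_const_mul' _ _ ENNReal.ofReal_ne_top]
        gcongr
        exact setLIntegral_dist_rpow_rieszMeasure_le hS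
    _ ≤ _ := by
        gcongr
        exact rieszMeasure_fst_mem_or_snd_mem_dist_lt_le hN R

end HolderVariation

section Translation

variable {X : Type*} [NormedAddCommGroup X] [NormedSpace ℝ X] {Ω : Set X} {w : X → ℝ} {δ : ℝ}

theorem mem_thickening_frontier_of_dist_lt {x y : X} {r : ℝ} (hx : x ∈ Ω) (hy : y ∉ Ω)
    (hxy : dist x y < r) : x ∈ thickening r (frontier Ω) ∧ y ∈ thickening r (frontier Ω) := by
  obtain ⟨p, hp, hxp, hyp⟩ := exists_mem_frontier_dist_le hx hy
  exact ⟨mem_thickening_iff.2 ⟨p, hp, hxp.trans_lt hxy⟩,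
    mem_thickening_iff.2 ⟨p, hp, hyp.trans_lt hxy⟩⟩

theorem mem_of_lt_comp_sub (hw : ∀ x, w x ∈ Icc (0 : ℝ) 1)
    (hw₀ : ∀ x ∈ thickening δ (frontier Ω), w x = 0) {x y z : X} (hx : x ∈ Ω)
    (hz : ‖z‖ < δ) (hxy : w (y - z) < w (x - z)) : x - z ∈ Ω := by
  by_contra hxz
  have := hw₀ _ (mem_thickening_frontier_of_dist_lt hx hxz (by simpa [dist_eq_norm] using hz)).2
  linarith [(hw (y - z)).1]

theorem le_dist_of_lt_of_notMem (hw : ∀ x, w x ∈ Icc (0 : ℝ) 1)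
    (hw₀ : ∀ x ∈ thickening δ (frontier Ω), w x = 0) {x y : X} (hx : x ∈ Ω) (hy : y ∉ Ω)
    (hxy : w y < w x) : δ ≤ dist x y := by
  by_contra! hdist
  have := hw₀ _ (mem_thickening_frontier_of_dist_lt hx hy hdist).1
  linarith [(hw y).1]

theorem nonlocalVariation_comp_sub_le [MeasurableSpace X] [BorelSpace X]
    [SecondCountableTopology X] {μ : Measure X} [SFinite μ] [μ.IsAddLeftInvariant] {β : ℝ}
    (hβ : β ≤ 0) (hΩ : MeasurableSet Ω) (hwm : Measurable w) (hw : ∀ x, w x ∈ Icc (0 : ℝ) 1)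
    (hδ : 0 < δ) (hw₀ : ∀ x ∈ thickening δ (frontier Ω), w x = 0) {z : X} {r : ℝ} (hz : ‖z‖ < r)
    (hrδ : r ≤ δ) :
    nonlocalVariation ((rieszMeasure μ β).restrict (Ω ×ˢ Ω)) (fun x => w (x - z)) ≤
      nonlocalVariation ((rieszMeasure μ β).restrict (Ω ×ˢ Ω)) w +
        ENNReal.ofReal (δ ^ β) * (μ Ω * μ (thickening r (frontier Ω))) := by
  set N := thickening r (frontier Ω)
  set W : X × X → ℝ≥0∞ := (Ω ×ˢ Ω).indicator fun p => ENNReal.ofReal (w p.1 - w p.2)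
  set S : Set (X × X) := (Ω ×ˢ N) ∩ {p | δ ≤ dist p.1 p.2}
  have hN : MeasurableSet N := isOpen_thickening.measurableSet
  have hS : MeasurableSet S :=
    (hΩ.prod hN).inter (measurableSet_le measurable_const measurable_dist)
  have hW : Measurable W := Measurable.indicator (by fun_prop) (hΩ.prod hΩ)
  have hpt : ∀ p ∈ Ω ×ˢ Ω, ENNReal.ofReal (w (p.1 - z) - w (p.2 - z)) ≤
      W (p.1 - z, p.2 - z) + S.indicator 1 p := by
    rintro ⟨x, y⟩ ⟨hx, hy⟩
    by_cases hlt : w (y - z) < w (x - z)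
    · have hxz := mem_of_lt_comp_sub hw hw₀ hx (hz.trans_le hrδ) hlt
      by_cases hyz : y - z ∈ Ω
      · rw [show W (x - z, y - z) = _ from indicator_of_mem (mk_mem_prod hxz hyz) _]
        exact le_self_add
      · have hyN : y ∈ N :=
          (mem_thickening_frontier_of_dist_lt hy hyz (by simpa [dist_eq_norm] using hz)).1
        have hdist : δ ≤ dist x y := by
          simpa using le_dist_of_lt_of_notMem hw hw₀ hxz hyz hlt
        rw [indicator_of_mem (show (x, y) ∈ S from ⟨⟨hx, hyN⟩, hdist⟩)]
        refine le_add_left (ENNReal.ofReal_le_one.2 ?_)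
        linarith [(hw (x - z)).2, (hw (y - z)).1]
    · exact (ENNReal.ofReal_of_nonpos (sub_nonpos.2 (not_lt.1 hlt))).trans_le zero_le
  calc nonlocalVariation ((rieszMeasure μ β).restrict (Ω ×ˢ Ω)) (fun x => w (x - z))
      ≤ ∫⁻ p, W (p.1 - z, p.2 - z) + S.indicator 1 p ∂rieszMeasure μ β :=
        (setLIntegral_mono' (hΩ.prod hΩ) hpt).trans (setLIntegral_le_lintegral _ _)
    _ = nonlocalVariation ((rieszMeasure μ β).restrict (Ω ×ˢ Ω)) w + rieszMeasure μ β S := by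
        rw [lintegral_add_right _ (measurable_one.indicator hS), lintegral_indicator_one hS,
          (measurePreserving_sub_sub_rieszMeasure z).lintegral_comp hW,
          lintegral_indicator (hΩ.prod hΩ), nonlocalVariation]
    _ ≤ _ := by
        rw [← Measure.prod_prod]
        gcongr
        exact rieszMeasure_inter_le_dist_le hδ hβ (hΩ.prod hN)

/-- Translations by vectors shorter than the distance of the support of `w` to `∂Ω` essentially do
not increase its energy in `Ω`, hence neither does mollification. -/
theorem nonlocalVariation_normed_convolution_le [HasContDiffBump X] [FiniteDimensional ℝ X]
    [MeasurableSpace X] [BorelSpace X] {μ : Measure X} [μ.IsAddHaarMeasure] {β : ℝ}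
    (hβ : β ≤ 0) (hΩ : MeasurableSet Ω) (hwm : Measurable w) (hw : ∀ x, w x ∈ Icc (0 : ℝ) 1)
    (hδ : 0 < δ) (hw₀ : ∀ x ∈ thickening δ (frontier Ω), w x = 0) (ρ : ContDiffBump (0 : X))
    (hρδ : ρ.rOut ≤ δ) :
    nonlocalVariation ((rieszMeasure μ β).restrict (Ω ×ˢ Ω))
        (convolution (ρ.normed μ) w (ContinuousLinearMap.lsmul ℝ ℝ) μ) ≤
      nonlocalVariation ((rieszMeasure μ β).restrict (Ω ×ˢ Ω)) w +
        ENNReal.ofReal (δ ^ β) * (μ Ω * μ (thickening ρ.rOut (frontier Ω))) := by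
  set m := (rieszMeasure μ β).restrict (Ω ×ˢ Ω)
  set B := nonlocalVariation m w +
    ENNReal.ofReal (δ ^ β) * (μ Ω * μ (thickening ρ.rOut (frontier Ω)))
  have habs : ∀ x, |w x| ≤ 1 := fun x => by
    rw [abs_of_nonneg (hw x).1]
    exact (hw x).2
  calc nonlocalVariation m (convolution (ρ.normed μ) w (ContinuousLinearMap.lsmul ℝ ℝ) μ)
      ≤ ∫⁻ z, ENNReal.ofReal (ρ.normed μ z) * nonlocalVariation m (fun x => w (x - z)) ∂μ :=
        nonlocalVariation_convolution_le ρ.integrable_normed (fun z => ρ.nonneg_normed z) hwm habs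
    _ ≤ ∫⁻ z, ENNReal.ofReal (ρ.normed μ z) * B ∂μ := lintegral_mono fun z => by
        by_cases hz : ‖z‖ < ρ.rOut
        · gcongr
          exact nonlocalVariation_comp_sub_le hβ hΩ hwm hw hδ hw₀ hz hρδ
        · have hz0 : ρ.normed μ z = 0 := by
            rw [← Function.notMem_support, ρ.support_normed_eq, mem_ball_zero_iff]
            exact hz
          simp [hz0]
    _ = B := by
        rw [lintegral_mul_const'' _ ρ.continuous_normed.measurable.ennreal_ofReal.aemeasurable,
          ← ofReal_integral_eq_lintegral_ofReal ρ.integrable_normed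
            (Eventually.of_forall fun z => ρ.nonneg_normed z), ρ.integral_normed,
          ENNReal.ofReal_one, one_mul]

end Translation

section Finiteness

variable {X : Type*} [NormedAddCommGroup X] [NormedSpace ℝ X] [FiniteDimensional ℝ X]
  [MeasurableSpace X] [BorelSpace X] {μ : Measure X} [μ.IsAddHaarMeasure] {β θ R : ℝ}

open Module (finrank)

theorem setLIntegral_ball_norm_rpow_lt_top (hβ : -(finrank ℝ X : ℝ) < β) :
    ∫⁻ h in ball 0 R, ENNReal.ofReal (‖h‖ ^ β) ∂μ < ⊤ := by
  rcases subsingleton_or_nontrivial X with hX | hX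
  · simp only [Subsingleton.elim _ (0 : X), setLIntegral_const]
    exact ENNReal.mul_lt_top ENNReal.ofReal_lt_top measure_ball_lt_top
  · have hint : IntegrableOn (fun h : X => ‖h‖ ^ β) (ball 0 R) μ :=
      integrableOn_ball_of_norm_le_rpow (α := -β) (C := 1) Module.finrank_pos (by linarith)
        (Eventually.of_forall fun h => by
          rw [neg_neg, one_mul, Real.norm_of_nonneg (by positivity)])
        (measurable_norm.pow_const β).aestronglyMeasurable
    exact hint.setLIntegral_lt_top

theorem setLIntegral_compl_ball_norm_rpow_lt_top (hR : 0 < R) (hβ : β < -(finrank ℝ X : ℝ)) :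
    ∫⁻ h in (ball 0 R)ᶜ, ENNReal.ofReal (‖h‖ ^ β) ∂μ < ⊤ := by
  have hβ0 : β ≤ 0 := by linarith [(finrank ℝ X).cast_nonneg (α := ℝ)]
  have hpt : ∀ h ∈ (ball (0 : X) R)ᶜ, ENNReal.ofReal (‖h‖ ^ β) ≤
      ENNReal.ofReal ((1 + R⁻¹) ^ (-β)) * ENNReal.ofReal ((1 + ‖h‖) ^ (-(-β))) := fun h hh => by
    have hRh : R ≤ ‖h‖ := by simpa using hh
    have hh0 : 0 < ‖h‖ := hR.trans_le hRh
    have hle : 1 + ‖h‖ ≤ (1 + R⁻¹) * ‖h‖ := by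
      rw [add_mul, one_mul, add_comm, ← div_eq_inv_mul]
      gcongr
      rwa [one_le_div hR]
    rw [← ENNReal.ofReal_mul (by positivity), neg_neg]
    refine ENNReal.ofReal_le_ofReal ?_
    calc ‖h‖ ^ β = (1 + R⁻¹) ^ (-β) * ((1 + R⁻¹) * ‖h‖) ^ β := by
          rw [Real.mul_rpow (by positivity) hh0.le, ← mul_assoc, ← Real.rpow_add (by positivity),
            neg_add_cancel, Real.rpow_zero, one_mul]
      _ ≤ (1 + R⁻¹) ^ (-β) * (1 + ‖h‖) ^ β := by
          exact mul_le_mul_of_nonneg_left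
            (Real.rpow_le_rpow_of_nonpos (by positivity) hle hβ0) (by positivity)
  calc ∫⁻ h in (ball 0 R)ᶜ, ENNReal.ofReal (‖h‖ ^ β) ∂μ
      ≤ ∫⁻ h : X, ENNReal.ofReal ((1 + R⁻¹) ^ (-β)) * ENNReal.ofReal ((1 + ‖h‖) ^ (-(-β))) ∂μ :=
        (setLIntegral_mono' measurableSet_ball.compl hpt).trans (setLIntegral_le_lintegral _ _)
    _ < ⊤ := by
        rw [lintegral_const_mul' _ _ ENNReal.ofReal_ne_top]
        exact ENNReal.mul_lt_top ENNReal.ofReal_lt_top (finite_integral_one_add_norm (by linarith))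

theorem rieszMeasure_prod_compl_inter_dist_lt_lt_top {Ω : Set X} (hΩ : MeasurableSet Ω)
    (hΓ : FiniteMinkowskiContent μ θ (frontier Ω)) (hβ : -(finrank ℝ X + θ) < β) :
    rieszMeasure μ β ((Ω ×ˢ Ωᶜ) ∩ {p | dist p.1 p.2 < 1 / 2}) < ⊤ := by
  obtain ⟨C, hC⟩ := hΓ
  have hS : MeasurableSet ((Ω ×ˢ Ωᶜ) ∩ {p : X × X | dist p.1 p.2 < 1 / 2}) :=
    (hΩ.prod hΩ.compl).inter (measurableSet_lt measurable_dist measurable_const)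
  have hpt : ∀ h : X, ENNReal.ofReal (‖h‖ ^ β) *
      μ {x | (x, x - h) ∈ (Ω ×ˢ Ωᶜ) ∩ {p : X × X | dist p.1 p.2 < 1 / 2}} ≤
        (ball 0 (1 / 2)).indicator
          (fun h => C * ENNReal.ofReal (2 ^ θ) * ENNReal.ofReal (‖h‖ ^ (β + θ))) h := fun h => by
    by_cases hh : h ∈ ball (0 : X) (1 / 2) ∧ h ≠ 0
    · have hpos : 0 < ‖h‖ := norm_pos_iff.2 hh.2
      have hlt : ‖h‖ < 1 / 2 := by simpa using hh.1
      have hsub : {x | (x, x - h) ∈ (Ω ×ˢ Ωᶜ) ∩ {p : X × X | dist p.1 p.2 < 1 / 2}} ⊆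
          thickening (2 * ‖h‖) (frontier Ω) := fun x hx =>
        (mem_thickening_frontier_of_dist_lt hx.1.1 hx.1.2
          (by rw [dist_eq_norm, sub_sub_cancel]; linarith)).1
      rw [indicator_of_mem hh.1]
      calc _ ≤ ENNReal.ofReal (‖h‖ ^ β) * (C * ENNReal.ofReal ((2 * ‖h‖) ^ θ)) := by
            gcongr
            exact (measure_mono hsub).trans (hC _ ⟨by positivity, by linarith⟩)
        _ = C * ENNReal.ofReal (2 ^ θ) * ENNReal.ofReal (‖h‖ ^ (β + θ)) := by
            rw [Real.mul_rpow zero_le_two hpos.le, Real.rpow_add hpos,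
              ENNReal.ofReal_mul (by positivity), ENNReal.ofReal_mul (by positivity)]
            ring
    · have hempty : {x | (x, x - h) ∈ (Ω ×ˢ Ωᶜ) ∩ {p : X × X | dist p.1 p.2 < 1 / 2}} = ∅ := by
        refine eq_empty_of_forall_notMem fun x hx => hh ⟨by simpa [dist_eq_norm] using hx.2, ?_⟩
        rintro rfl
        exact hx.1.2 (by simpa using hx.1.1)
      rw [hempty, measure_empty, mul_zero]
      exact zero_le
  rw [rieszMeasure_eq_lintegral hS]
  refine (lintegral_mono hpt).trans_lt ?_
  rw [lintegral_indicator measurableSet_ball, lintegral_const_mul' _ _ (by finiteness)]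
  exact ENNReal.mul_lt_top (by finiteness) (setLIntegral_ball_norm_rpow_lt_top (by linarith))

theorem rieszMeasure_prod_compl_lt_top {Ω : Set X} (hΩ : MeasurableSet Ω) (hΩfin : μ Ω < ⊤)
    (hΓ : FiniteMinkowskiContent μ θ (frontier Ω)) (hβ : β < -(finrank ℝ X : ℝ))
    (hβθ : -(finrank ℝ X + θ) < β) :
    rieszMeasure μ β (Ω ×ˢ Ωᶜ) < ⊤ := by
  have hfar : rieszMeasure μ β {p | p.1 ∈ Ω ∧ p.1 - p.2 ∈ (ball 0 (1 / 2))ᶜ} < ⊤ := by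
    rw [rieszMeasure_fst_mem_sub_mem hΩ measurableSet_ball.compl]
    exact ENNReal.mul_lt_top (setLIntegral_compl_ball_norm_rpow_lt_top (by norm_num) hβ) hΩfin
  refine (measure_mono fun p hp => ?_).trans_lt <| (measure_union_le _ _).trans_lt <|
    ENNReal.add_lt_top.2 ⟨rieszMeasure_prod_compl_inter_dist_lt_lt_top hΩ hΓ hβθ, hfar⟩
  refine (lt_or_ge (dist p.1 p.2) (1 / 2)).imp (fun h => ⟨hp, h⟩) fun h => ⟨hp.1, ?_⟩
  simpa [dist_eq_norm] using h

end Finiteness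

/-! ### Regular values -/

section RegularValues

open Module (finrank)

variable {X : Type*} [NormedAddCommGroup X] [NormedSpace ℝ X] [FiniteDimensional ℝ X]

/-- A critical point `x` of `f - a` at level `t` satisfies `a = f' x` and `t = f x - f' x x`, so
that the exceptional pairs `(a, t)` lie in a `C¹` image of `X`. -/
theorem dimH_range_fderiv_prod_le {f : X → ℝ} {s : Set X} (hs : IsOpen s) (hsc : Convex ℝ s)
    (hf : ContDiffOn ℝ 2 f s) :
    dimH ((fun x => (fderiv ℝ f x, f x - fderiv ℝ f x x)) '' s) ≤ finrank ℝ X := by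
  have hf' : ContDiffOn ℝ 1 (fderiv ℝ f) s := hf.fderiv_of_isOpen hs (by norm_num)
  have hH : ContDiffOn ℝ 1 (fun x => (fderiv ℝ f x, f x - fderiv ℝ f x x)) s :=
    hf'.prodMk ((hf.of_le (by norm_num)).sub (hf'.clm_apply contDiffOn_id))
  calc dimH ((fun x => (fderiv ℝ f x, f x - fderiv ℝ f x x)) '' s)
      ≤ dimH s := hH.dimH_image_le hsc subset_rfl
    _ ≤ dimH (univ : Set X) := dimH_mono (subset_univ s)
    _ = finrank ℝ X := Real.dimH_univ_eq_finrank X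

theorem addHaar_eq_zero_of_dimH_lt [MeasurableSpace X] [BorelSpace X] {μ : Measure X}
    [μ.IsAddHaarMeasure] {s : Set X} (hs : dimH s < finrank ℝ X) : μ s = 0 := by
  have h : μH[finrank ℝ X] s = 0 := by
    exact_mod_cast hausdorffMeasure_of_dimH_lt (d := finrank ℝ X) (by exact_mod_cast hs)
  exact (Measure.absolutelyContinuous_isAddHaarMeasure μ μH[finrank ℝ X]) h

theorem ae_ae_fderiv_ne {f : X → ℝ} {s : Set X} (hs : IsOpen s) (hsc : Convex ℝ s)
    (hf : ContDiffOn ℝ 2 f s) {ν : Measure (X →L[ℝ] ℝ)} [ν.IsAddHaarMeasure] :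
    ∀ᵐ a ∂ν, ∀ᵐ t : ℝ, ∀ x ∈ s, f x - a x = t → fderiv ℝ f x ≠ a := by
  have hnull : ν.prod volume ((fun x => (fderiv ℝ f x, f x - fderiv ℝ f x x)) '' s) = 0 := by
    refine addHaar_eq_zero_of_dimH_lt ((dimH_range_fderiv_prod_le hs hsc hf).trans_lt ?_)
    have : finrank ℝ (X →L[ℝ] ℝ) = finrank ℝ X := by
      rw [← Subspace.dual_finrank_eq (K := ℝ) (V := X)]
      exact (LinearMap.toContinuousLinearMap.finrank_eq).symm
    rw [Module.finrank_prod, this, Module.finrank_self]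
    exact_mod_cast Nat.lt_succ_self _
  filter_upwards [Measure.ae_ae_of_ae_prod (measure_eq_zero_iff_ae_notMem.1 hnull)] with a ha
  filter_upwards [ha] with t ht x hx hxt hxa
  exact ht ⟨x, hx, by simp only [hxa, hxt]⟩

/-- Subtracting `a ∘ Θ` for a chart `Θ` instead of `a` itself allows bounded perturbations. -/
theorem ae_ae_fderiv_sub_comp_ne_zero {Θ : OpenPartialHomeomorph X X} (hΘs : Θ.source = univ)
    (hΘc : Convex ℝ Θ.target) (hΘ : ContDiff ℝ 2 Θ) (hΘ' : ContDiffOn ℝ 2 Θ.symm Θ.target)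
    {f : X → ℝ} (hf : ContDiff ℝ 2 f) {ν : Measure (X →L[ℝ] ℝ)} [ν.IsAddHaarMeasure] :
    ∀ᵐ a ∂ν, ∀ᵐ t : ℝ, ∀ x, f x - a (Θ x) = t → fderiv ℝ (fun x => f x - a (Θ x)) x ≠ 0 := by
  have hg : ContDiffOn ℝ 2 (f ∘ Θ.symm) Θ.target := hf.comp_contDiffOn hΘ'
  filter_upwards [ae_ae_fderiv_ne Θ.open_target hΘc hg (ν := ν)] with a ha
  filter_upwards [ha] with t ht x hxt hd
  have hx : Θ x ∈ Θ.target := Θ.map_source (hΘs ▸ mem_univ x)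
  have hΘx : Θ.symm (Θ x) = x := Θ.left_inv (hΘs ▸ mem_univ x)
  have hmem := Θ.open_target.mem_nhds hx
  refine ht (Θ x) hx (by rwa [Function.comp_apply, hΘx]) ?_
  have hcrit : HasFDerivAt (fun x => f x - a (Θ x)) (0 : X →L[ℝ] ℝ) x := by
    have hdiff : ContDiff ℝ 2 fun x => f x - a (Θ x) := hf.sub (a.contDiff.comp hΘ)
    exact hd ▸ (hdiff.differentiable two_ne_zero x).hasFDerivAt
  have hsymm := (hΘ'.contDiffAt hmem).differentiableAt two_ne_zero
  have hcomp : HasFDerivAt (fun y => (f ∘ Θ.symm) y - a y) (0 : X →L[ℝ] ℝ) (Θ x) := by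
    rw [← hΘx] at hcrit
    refine (hcrit.comp (Θ x) hsymm.hasFDerivAt).congr_of_eventuallyEq ?_ |>.congr_fderiv (by simp)
    filter_upwards [hmem] with y hy
    simp [Θ.right_inv hy]
  have hgx := (hg.contDiffAt hmem).differentiableAt two_ne_zero
  exact sub_eq_zero.1 ((hgx.hasFDerivAt.sub a.hasFDerivAt).unique hcomp)

end RegularValues

/-! ### Smooth approximants -/

section Cutoff

variable {X : Type*} [PseudoEMetricSpace X] {Γ : Set X} {δ : ℝ}

/-- The cutoff vanishing on the `δ`-neighbourhood of `Γ` and equal to `1` off its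
`2δ`-neighbourhood. -/
noncomputable def cutoff (Γ : Set X) (hδ : 0 < δ) (x : X) : ℝ :=
  1 - thickenedIndicator hδ (thickening δ Γ) x

theorem continuous_cutoff (hδ : 0 < δ) : Continuous (cutoff Γ hδ) :=
  continuous_const.sub
    (NNReal.continuous_coe.comp (thickenedIndicator hδ (thickening δ Γ)).continuous)

theorem cutoff_mem_Icc (hδ : 0 < δ) (x : X) : cutoff Γ hδ x ∈ Icc (0 : ℝ) 1 :=
  ⟨sub_nonneg.2 (by exact_mod_cast thickenedIndicator_le_one hδ _ x), sub_le_self _ (by positivity)⟩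

theorem cutoff_eq_zero (hδ : 0 < δ) {x : X} (hx : x ∈ thickening δ Γ) : cutoff Γ hδ x = 0 := by
  rw [cutoff, thickenedIndicator_one hδ _ hx, NNReal.coe_one, sub_self]

theorem cutoff_eq_one (hδ : 0 < δ) {x : X} (hx : x ∉ thickening (2 * δ) Γ) :
    cutoff Γ hδ x = 1 := by
  have hx' : x ∉ thickening δ (thickening δ Γ) := fun h => hx <| by
    rw [two_mul]
    exact thickening_thickening_subset δ δ Γ h
  rw [cutoff, thickenedIndicator_zero hδ _ hx', NNReal.coe_zero, sub_zero]

theorem cutoff_sub_le {X : Type*} [PseudoMetricSpace X] {Γ : Set X} (hδ : 0 < δ) (x y : X) :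
    cutoff Γ hδ x - cutoff Γ hδ y ≤ dist x y / δ := by
  have h := (lipschitzWith_thickenedIndicator hδ (thickening δ Γ)).dist_le_mul y x
  rw [NNReal.dist_eq, NNReal.coe_inv, Real.coe_toNNReal _ hδ.le, dist_comm,
    ← div_eq_inv_mul] at h
  calc cutoff Γ hδ x - cutoff Γ hδ y
      = thickenedIndicator hδ (thickening δ Γ) y - thickenedIndicator hδ (thickening δ Γ) x := by
        simp only [cutoff]
        ring
    _ ≤ dist x y / δ := (le_abs_self _).trans h

/-- Interpolates between the Lipschitz bound and the range bound. -/
theorem cutoff_sub_le_rpow {X : Type*} [PseudoMetricSpace X] {Γ : Set X} (hδ : 0 < δ) {σ : ℝ}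
    (hσ : σ ∈ Icc (0 : ℝ) 1) (x y : X) :
    cutoff Γ hδ x - cutoff Γ hδ y ≤ δ ^ (-σ) * dist x y ^ σ := by
  have hpow : δ ^ (-σ) * dist x y ^ σ = (dist x y / δ) ^ σ := by
    rw [Real.div_rpow dist_nonneg hδ.le, Real.rpow_neg hδ.le, inv_mul_eq_div]
  rw [hpow]
  rcases le_total (dist x y / δ) 1 with h | h
  · calc cutoff Γ hδ x - cutoff Γ hδ y ≤ dist x y / δ := cutoff_sub_le hδ x y
      _ = (dist x y / δ) ^ (1 : ℝ) := (Real.rpow_one _).symm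
      _ ≤ (dist x y / δ) ^ σ :=
        Real.rpow_le_rpow_of_exponent_ge' (by positivity) h hσ.1 hσ.2
  · calc cutoff Γ hδ x - cutoff Γ hδ y ≤ 1 := by
          linarith [(cutoff_mem_Icc (Γ := Γ) hδ x).2, (cutoff_mem_Icc (Γ := Γ) hδ y).1]
      _ ≤ (dist x y / δ) ^ σ := Real.one_le_rpow h hσ.1

end Cutoff

section EnergyOfCorrections

variable {X : Type*} [NormedAddCommGroup X] [MeasurableSpace X] [BorelSpace X]
  [SecondCountableTopology X] {μ : Measure X} [SFinite μ] [μ.IsAddLeftInvariant]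
  [μ.IsNegInvariant] {Ω : Set X} {β σ R : ℝ}

theorem nonlocalVariation_cutoff_le (hΩ : MeasurableSet Ω) (hR : ∀ x ∈ Ω, ∀ y ∈ Ω, dist x y < R)
    (hσ : σ ∈ Icc (0 : ℝ) 1) (Γ : Set X) {δ : ℝ} (hδ : 0 < δ) :
    nonlocalVariation ((rieszMeasure μ β).restrict (Ω ×ˢ Ω)) (cutoff Γ hδ) ≤
      2 * (∫⁻ h in ball 0 R, ENNReal.ofReal (‖h‖ ^ (β + σ)) ∂μ) *
        (ENNReal.ofReal (δ ^ (-σ)) * μ (thickening (2 * δ) Γ)) := by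
  refine (nonlocalVariation_rieszMeasure_restrict_le hΩ
    (isOpen_thickening (δ := 2 * δ) (E := Γ)).measurableSet (by positivity)
    (fun x _ y _ => cutoff_sub_le_rpow hδ hσ x y) (fun x hx y hy => ?_) hR).trans_eq (by ring)
  rw [cutoff_eq_one hδ hx.2, cutoff_eq_one hδ hy.2]

theorem nonlocalVariation_dual_comp_le [NormedSpace ℝ X] (hΩ : MeasurableSet Ω)
    (hR : ∀ x ∈ Ω, ∀ y ∈ Ω, dist x y < R) {Θ : X → X} {L : ℝ≥0} (hΘ : LipschitzOnWith L Θ Ω)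
    (a : X →L[ℝ] ℝ) :
    nonlocalVariation ((rieszMeasure μ β).restrict (Ω ×ˢ Ω)) (fun x => -a (Θ x)) ≤
      2 * L * (∫⁻ h in ball 0 R, ENNReal.ofReal (‖h‖ ^ (β + 1)) ∂μ) * μ Ω * ENNReal.ofReal ‖a‖ := by
  refine (nonlocalVariation_rieszMeasure_restrict_le (σ := 1) (M := ‖a‖ * L) hΩ hΩ
    (by positivity) (fun x hx y hy => ?_) (fun x hx => (hx.2 hx.1).elim) hR).trans_eq ?_
  · calc -a (Θ x) - -a (Θ y) = a (Θ y - Θ x) := by rw [map_sub]; ring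
      _ ≤ ‖a‖ * ‖Θ y - Θ x‖ := (le_abs_self _).trans (a.le_opNorm _)
      _ ≤ ‖a‖ * (L * dist x y) := by
        gcongr
        rw [← dist_eq_norm, dist_comm]
        exact hΘ.dist_le_mul x hx y hy
      _ = ‖a‖ * L * dist x y ^ (1 : ℝ) := by rw [Real.rpow_one, mul_assoc]
  · rw [ENNReal.ofReal_mul (norm_nonneg a), ENNReal.ofReal_coe_nnreal]
    ring

end EnergyOfCorrections

section SmoothApprox

open OpenPartialHomeomorph (univUnitBall)

theorem normed_convolution_congr {X F : Type*} [NormedAddCommGroup X] [NormedSpace ℝ X]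
    [HasContDiffBump X] [MeasurableSpace X] [BorelSpace X] [FiniteDimensional ℝ X]
    [NormedAddCommGroup F] [NormedSpace ℝ F] {μ : Measure X} [IsLocallyFiniteMeasure μ]
    [μ.IsOpenPosMeasure] {ρ : ContDiffBump (0 : X)} {w w' : X → F} {x : X}
    (h : EqOn w w' (ball x ρ.rOut)) :
    convolution (ρ.normed μ) w (ContinuousLinearMap.lsmul ℝ ℝ) μ x =
      convolution (ρ.normed μ) w' (ContinuousLinearMap.lsmul ℝ ℝ) μ x := by
  refine integral_congr_ae (Eventually.of_forall fun z => ?_)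
  by_cases hz : z ∈ ball (0 : X) ρ.rOut
  · have hxz : x - z ∈ ball x ρ.rOut := by simpa [dist_eq_norm] using hz
    simp only [h hxz]
  · rw [← ρ.support_normed_eq (μ := μ), Function.notMem_support] at hz
    simp [hz]

theorem indicator_one_mem_Icc {X : Type*} (E : Set X) (x : X) :
    E.indicator (1 : X → ℝ) x ∈ Icc (0 : ℝ) 1 :=
  ⟨indicator_nonneg (fun _ _ => zero_le_one) x, indicator_le_self' (fun _ _ => zero_le_one) x⟩

theorem locallyIntegrable_of_mem_Icc {X : Type*} [TopologicalSpace X] [MeasurableSpace X]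
    {μ : Measure X} [IsLocallyFiniteMeasure μ] {w : X → ℝ} (hw : Measurable w)
    (hw₀₁ : ∀ x, w x ∈ Icc (0 : ℝ) 1) : LocallyIntegrable w μ := by
  refine (locallyIntegrable_const (1 : ℝ)).mono hw.aestronglyMeasurable
    (Eventually.of_forall fun x => ?_)
  rw [Real.norm_of_nonneg (hw₀₁ x).1, norm_one]
  exact (hw₀₁ x).2

theorem indicator_mul_cutoff_mem_Icc {X : Type*} [PseudoEMetricSpace X] {E Γ : Set X} {δ : ℝ}
    (hδ : 0 < δ) (x : X) : E.indicator (1 : X → ℝ) x * cutoff Γ hδ x ∈ Icc (0 : ℝ) 1 :=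
  unitInterval.mul_mem (indicator_one_mem_Icc E x) (cutoff_mem_Icc hδ x)

theorem measurable_indicator_mul_cutoff {X : Type*} [PseudoEMetricSpace X] [MeasurableSpace X]
    [OpensMeasurableSpace X] {E Γ : Set X} {δ : ℝ} (hE : MeasurableSet E) (hδ : 0 < δ) :
    Measurable (E.indicator 1 * cutoff Γ hδ) :=
  (measurable_one.indicator hE).mul (continuous_cutoff hδ).measurable

theorem mem_iff_mem_of_notMem_thickening_frontier {X : Type*} [NormedAddCommGroup X]
    [NormedSpace ℝ X] {E : Set X} {r : ℝ} {x y : X} (hx : x ∉ thickening r (frontier E))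
    (hy : y ∈ ball x r) : y ∈ E ↔ x ∈ E :=
  ⟨fun hyE => by_contra fun hxE => hx (mem_thickening_frontier_of_dist_lt hyE hxE hy).2,
    fun hxE => by_contra fun hyE => hx (mem_thickening_frontier_of_dist_lt hxE hyE
      (mem_ball'.1 hy)).1⟩

theorem abs_apply_univUnitBall_le {X : Type*} [NormedAddCommGroup X] [InnerProductSpace ℝ X]
    (a : X →L[ℝ] ℝ) (x : X) : |a (univUnitBall x)| ≤ ‖a‖ := by
  have hx : ‖(univUnitBall x : X)‖ < 1 :=
    mem_ball_zero_iff.1 (univUnitBall.map_source (mem_univ x))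
  exact (a.le_opNorm _).trans (mul_le_of_le_one_right (norm_nonneg a) hx.le)

theorem mem_thickening_of_mem_ball {X : Type*} [PseudoMetricSpace X] {Γ : Set X} {r ε : ℝ}
    {x y : X} (hy : y ∈ ball x r) (hyΓ : y ∈ thickening ε Γ) : x ∈ thickening (r + ε) Γ :=
  thickening_thickening_subset r ε Γ (mem_thickening_iff.2 ⟨y, hyΓ, mem_ball'.1 hy⟩)

variable {X : Type*} [NormedAddCommGroup X] [InnerProductSpace ℝ X] [FiniteDimensional ℝ X]
  [MeasurableSpace X] [BorelSpace X] {μ : Measure X} [μ.IsAddHaarMeasure] {E Γ : Set X} {δ : ℝ}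

/-- The indicator of `E`, cut off near `Γ` at scale `δ` and mollified by `ρ`, minus the bounded
smooth function `x ↦ a (x / √(1 + ‖x‖²))`, a small generic choice of `a` making almost every value
regular. -/
noncomputable def smoothApprox (μ : Measure X) (E Γ : Set X) (hδ : 0 < δ)
    (ρ : ContDiffBump (0 : X)) (a : X →L[ℝ] ℝ) (x : X) : ℝ :=
  convolution (ρ.normed μ) (E.indicator 1 * cutoff Γ hδ) (ContinuousLinearMap.lsmul ℝ ℝ) μ x -
    a (univUnitBall x)

theorem contDiff_convolution_indicator_mul_cutoff (hE : MeasurableSet E) (hδ : 0 < δ)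
    (ρ : ContDiffBump (0 : X)) {k : ℕ∞} :
    ContDiff ℝ k (convolution (ρ.normed μ) (E.indicator 1 * cutoff Γ hδ)
      (ContinuousLinearMap.lsmul ℝ ℝ) μ) :=
  ρ.hasCompactSupport_normed.contDiff_convolution_left _ ρ.contDiff_normed
    (locallyIntegrable_of_mem_Icc (measurable_indicator_mul_cutoff hE hδ)
      (indicator_mul_cutoff_mem_Icc hδ))

theorem contDiff_smoothApprox (hE : MeasurableSet E) (hδ : 0 < δ) (ρ : ContDiffBump (0 : X))
    (a : X →L[ℝ] ℝ) : ContDiff ℝ (⊤ : ℕ∞) (smoothApprox μ E Γ hδ ρ a) :=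
  (contDiff_convolution_indicator_mul_cutoff hE hδ ρ).sub
    (a.contDiff.comp OpenPartialHomeomorph.contDiff_univUnitBall)

theorem ae_ae_fderiv_smoothApprox_ne_zero (hE : MeasurableSet E) (hδ : 0 < δ)
    (ρ : ContDiffBump (0 : X)) {ν : Measure (X →L[ℝ] ℝ)} [ν.IsAddHaarMeasure] :
    ∀ᵐ a ∂ν, ∀ᵐ t : ℝ, ∀ x, smoothApprox μ E Γ hδ ρ a x = t →
      fderiv ℝ (smoothApprox μ E Γ hδ ρ a) x ≠ 0 :=
  ae_ae_fderiv_sub_comp_ne_zero (Θ := univUnitBall) rfl (convex_ball 0 1)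
    (OpenPartialHomeomorph.contDiff_univUnitBall (n := 2))
    (OpenPartialHomeomorph.contDiffOn_univUnitBall_symm (n := 2))
    (contDiff_convolution_indicator_mul_cutoff (k := 2) hE hδ ρ)

variable {ρ : ContDiffBump (0 : X)} {a : X →L[ℝ] ℝ} {x : X}

theorem smoothApprox_eq_of_notMem_thickening (hδ : 0 < δ) (hρδ : ρ.rOut ≤ δ)
    (hx : x ∉ thickening (3 * δ) Γ) :
    smoothApprox μ E Γ hδ ρ a x =
      convolution (ρ.normed μ) (E.indicator (1 : X → ℝ)) (ContinuousLinearMap.lsmul ℝ ℝ) μ x -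
        a (univUnitBall x) := by
  refine congrArg (· - _) (normed_convolution_congr fun y hy => ?_)
  have hyΓ : y ∉ thickening (2 * δ) Γ := fun h =>
    hx (thickening_mono (by linarith) Γ (mem_thickening_of_mem_ball hy h))
  rw [Pi.mul_apply, cutoff_eq_one hδ hyΓ, mul_one]

theorem abs_smoothApprox_sub_indicator_le (hδ : 0 < δ) (hρδ : ρ.rOut ≤ δ)
    (hxΓ : x ∉ thickening (3 * δ) Γ) (hxE : x ∉ thickening (3 * δ) (frontier E)) :
    |smoothApprox μ E Γ hδ ρ a x - E.indicator 1 x| ≤ ‖a‖ := by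
  have hE : ∀ y ∈ ball x ρ.rOut, E.indicator (1 : X → ℝ) y = E.indicator 1 x := fun y hy => by
    have hyx := mem_iff_mem_of_notMem_thickening_frontier hxE
      (ball_subset_ball (by linarith) hy)
    by_cases hx : x ∈ E
    · rw [indicator_of_mem hx, indicator_of_mem (hyx.2 hx), Pi.one_apply, Pi.one_apply]
    · rw [indicator_of_notMem hx, indicator_of_notMem (mt hyx.1 hx)]
  rw [smoothApprox_eq_of_notMem_thickening hδ hρδ hxΓ, ρ.normed_convolution_eq_right hE,
    sub_right_comm, sub_self, zero_sub, abs_neg]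
  exact abs_apply_univUnitBall_le a x

end SmoothApprox

section SmallEnergy

open OpenPartialHomeomorph (univUnitBall)
open Module (finrank)

theorem exists_lipschitzOnWith_univUnitBall {X : Type*} [NormedAddCommGroup X]
    [InnerProductSpace ℝ X] [ProperSpace X] {Ω : Set X} (hΩ : IsBounded Ω) :
    ∃ L, LipschitzOnWith L univUnitBall Ω := by
  obtain ⟨R, hR⟩ := hΩ.subset_closedBall 0
  have hΘ : ContDiff ℝ 1 (univUnitBall (E := X)) :=
    OpenPartialHomeomorph.contDiff_univUnitBall (n := 1)
  obtain ⟨L, hL⟩ := hΘ.contDiffOn.exists_lipschitzOnWith one_ne_zero (convex_closedBall 0 R)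
    (isCompact_closedBall 0 R)
  exact ⟨L, hL.mono hR⟩

variable {X : Type*} [NormedAddCommGroup X] [NormedSpace ℝ X] [FiniteDimensional ℝ X]
  [MeasurableSpace X] [BorelSpace X] {μ : Measure X} [μ.IsAddHaarMeasure] {Ω : Set X} {β θ : ℝ}

theorem exists_dist_lt_of_isBounded {X : Type*} [PseudoMetricSpace X] {Ω : Set X}
    (hΩ : IsBounded Ω) : ∃ R, ∀ x ∈ Ω, ∀ y ∈ Ω, dist x y < R :=
  let ⟨C, hC⟩ := isBounded_iff.1 hΩ
  ⟨C + 1, fun _ hx _ hy => (hC hx hy).trans_lt (lt_add_one C)⟩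

theorem eventually_nonlocalVariation_cutoff_le (hΩ : MeasurableSet Ω) (hΩb : IsBounded Ω)
    {Γ : Set X} (hΓ : FiniteMinkowskiContent μ θ Γ) (hθ : 0 < θ)
    (hβθ : -(finrank ℝ X + θ) < β) (hβ : -(finrank ℝ X + 1) < β) {τ : ℝ≥0∞} (hτ : 0 < τ) :
    ∀ᶠ δ in 𝓝[>] 0, ∀ hδ : 0 < δ,
      nonlocalVariation ((rieszMeasure μ β).restrict (Ω ×ˢ Ω)) (cutoff Γ hδ) ≤ τ := by
  obtain ⟨R, hR⟩ := exists_dist_lt_of_isBounded hΩb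
  obtain ⟨σ, hσ_lb, hσ_ub⟩ : ∃ σ, max 0 (-finrank ℝ X - β) < σ ∧ σ < min θ 1 :=
    exists_between (max_lt (lt_min hθ one_pos) (lt_min (by linarith) (by linarith)))
  rw [max_lt_iff] at hσ_lb
  rw [lt_min_iff] at hσ_ub
  have hlim := ENNReal.Tendsto.const_mul
    (a := 2 * ∫⁻ h in ball 0 R, ENNReal.ofReal (‖h‖ ^ (β + σ)) ∂μ)
    (hΓ.tendsto_measure_thickening_two_mul hσ_ub.1) (Or.inr (ENNReal.mul_ne_top (by simp)
      (setLIntegral_ball_norm_rpow_lt_top (by linarith)).ne))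
  rw [mul_zero] at hlim
  filter_upwards [hlim.eventually_le_const hτ] with δ hδτ hδ
  exact (nonlocalVariation_cutoff_le hΩ hR ⟨hσ_lb.1.le, hσ_ub.2.le⟩ Γ hδ).trans hδτ

theorem tendsto_nonlocalVariation_dual_comp (hΩ : MeasurableSet Ω) (hΩb : IsBounded Ω)
    {Θ : X → X} {L : ℝ≥0} (hΘ : LipschitzOnWith L Θ Ω) (hβ : -(finrank ℝ X + 1) < β) :
    Tendsto (fun a : X →L[ℝ] ℝ => nonlocalVariation ((rieszMeasure μ β).restrict (Ω ×ˢ Ω))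
      (fun x => -a (Θ x))) (𝓝 0) (𝓝 0) := by
  obtain ⟨R, hR⟩ := exists_dist_lt_of_isBounded hΩb
  refine tendsto_of_tendsto_of_tendsto_of_le_of_le tendsto_const_nhds ?_ (fun _ => zero_le)
    (nonlocalVariation_dual_comp_le hΩ hR hΘ)
  have hnorm : Tendsto (fun a : X →L[ℝ] ℝ => ENNReal.ofReal ‖a‖) (𝓝 0) (𝓝 0) := by
    simpa using ENNReal.tendsto_ofReal (tendsto_norm_zero (E := X →L[ℝ] ℝ))
  have hI : ∫⁻ h in ball 0 R, ENNReal.ofReal (‖h‖ ^ (β + 1)) ∂μ < ⊤ :=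
    setLIntegral_ball_norm_rpow_lt_top (by linarith)
  have hΩfin : μ Ω < ⊤ := hΩb.measure_lt_top
  simpa using ENNReal.Tendsto.const_mul hnorm (Or.inr (by finiteness))

end SmallEnergy

section ExistsSmoothApprox

open OpenPartialHomeomorph (univUnitBall)
open Module (finrank)

variable {X : Type*} [NormedAddCommGroup X] [InnerProductSpace ℝ X] [FiniteDimensional ℝ X]
  [MeasurableSpace X] [BorelSpace X] {μ : Measure X} [μ.IsAddHaarMeasure] {E Ω : Set X} {β θ : ℝ}

theorem nonlocalVariation_smoothApprox_le (hβ : β ≤ 0) (hΩ : MeasurableSet Ω)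
    (hE : MeasurableSet E) {δ : ℝ} (hδ : 0 < δ) {ρ : ContDiffBump (0 : X)} (hρδ : ρ.rOut ≤ δ)
    (a : X →L[ℝ] ℝ) :
    nonlocalVariation ((rieszMeasure μ β).restrict (Ω ×ˢ Ω))
        (smoothApprox μ E (frontier Ω) hδ ρ a) ≤
      nonlocalPerimeter ((rieszMeasure μ β).restrict (Ω ×ˢ Ω)) E +
        nonlocalVariation ((rieszMeasure μ β).restrict (Ω ×ˢ Ω)) (cutoff (frontier Ω) hδ) +
        ENNReal.ofReal (δ ^ β) * (μ Ω * μ (thickening ρ.rOut (frontier Ω))) +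
        nonlocalVariation ((rieszMeasure μ β).restrict (Ω ×ˢ Ω))
          (fun x => -a (univUnitBall x)) := by
  set m := (rieszMeasure μ β).restrict (Ω ×ˢ Ω)
  have hw : Measurable (E.indicator 1 * cutoff (frontier Ω) hδ) :=
    measurable_indicator_mul_cutoff hE hδ
  set w := E.indicator 1 * cutoff (frontier Ω) hδ
  have hw₀ : ∀ x ∈ thickening δ (frontier Ω), w x = 0 := fun x hx => by
    simp only [w, Pi.mul_apply, cutoff_eq_zero hδ hx, mul_zero]
  have hu : Continuous (convolution (ρ.normed μ) w (ContinuousLinearMap.lsmul ℝ ℝ) μ) :=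
    (contDiff_convolution_indicator_mul_cutoff (k := 0) hE hδ ρ).continuous
  calc nonlocalVariation m (smoothApprox μ E (frontier Ω) hδ ρ a)
      = nonlocalVariation m (convolution (ρ.normed μ) w (ContinuousLinearMap.lsmul ℝ ℝ) μ +
          fun x => -a (univUnitBall x)) := by
        exact congrArg _ (funext fun x => sub_eq_add_neg _ _)
    _ ≤ nonlocalVariation m (convolution (ρ.normed μ) w (ContinuousLinearMap.lsmul ℝ ℝ) μ) +
          nonlocalVariation m (fun x => -a (univUnitBall x)) :=
        nonlocalVariation_add_le hu.measurable
    _ ≤ _ := by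
        gcongr
        refine (nonlocalVariation_normed_convolution_le hβ hΩ hw (indicator_mul_cutoff_mem_Icc hδ)
          hδ hw₀ ρ hρδ).trans ?_
        gcongr
        rw [← nonlocalVariation_indicator hE]
        exact nonlocalVariation_mul_le (measurable_one.indicator hE) (indicator_one_mem_Icc E)
          (cutoff_mem_Icc hδ)

/-- The parameters are chosen one after the other: the cutoff scale `δ`, then the mollification
radius `r`, then the perturbation `a`. -/
theorem exists_nonlocalVariation_smoothApprox_le (hΩ : MeasurableSet Ω) (hΩb : IsBounded Ω)
    (hΓ : FiniteMinkowskiContent μ θ (frontier Ω)) (hθ : 0 < θ) (hβ₀ : β ≤ 0)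
    (hβθ : -(finrank ℝ X + θ) < β) (hβ : -(finrank ℝ X + 1) < β) (hE : MeasurableSet E)
    {τ : ℝ} (hτ : 0 < τ) :
    ∃ (δ : ℝ) (hδ : 0 < δ) (ρ : ContDiffBump (0 : X)) (a : X →L[ℝ] ℝ),
      3 * δ ≤ τ ∧ ρ.rOut ≤ δ ∧ ρ.rOut ≤ 2 * ρ.rIn ∧ ‖a‖ ≤ τ ∧
      (∀ᵐ t : ℝ, ∀ x, smoothApprox μ E (frontier Ω) hδ ρ a x = t →
        fderiv ℝ (smoothApprox μ E (frontier Ω) hδ ρ a) x ≠ 0) ∧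
      nonlocalVariation ((rieszMeasure μ β).restrict (Ω ×ˢ Ω))
          (smoothApprox μ E (frontier Ω) hδ ρ a) ≤
        nonlocalPerimeter ((rieszMeasure μ β).restrict (Ω ×ˢ Ω)) E + ENNReal.ofReal τ := by
  have hτ₃ : 0 < ENNReal.ofReal (τ / 3) := ENNReal.ofReal_pos.2 (by positivity)
  obtain ⟨δ, hcut, hδ⟩ := ((eventually_nonlocalVariation_cutoff_le hΩ hΩb hΓ hθ hβθ hβ hτ₃).and
    (Ioc_mem_nhdsGT (by positivity : 0 < τ / 3))).exists
  obtain ⟨r, hmol, hr⟩ : ∃ r : ℝ, ENNReal.ofReal (δ ^ β) * (μ Ω * μ (thickening r (frontier Ω))) ≤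
      ENNReal.ofReal (τ / 3) ∧ r ∈ Ioc 0 δ := by
    have hlim := ENNReal.Tendsto.const_mul (ENNReal.Tendsto.const_mul
      (hΓ.tendsto_measure_thickening hθ) (Or.inr (hΩb.measure_lt_top (μ := μ)).ne))
      (Or.inr (ENNReal.ofReal_ne_top (r := δ ^ β)))
    rw [mul_zero, mul_zero] at hlim
    exact ((hlim.eventually_le_const hτ₃).and (Ioc_mem_nhdsGT hδ.1)).exists
  let ρ : ContDiffBump (0 : X) := ⟨r / 2, r, half_pos hr.1, half_lt_self hr.1⟩
  obtain ⟨L, hL⟩ := exists_lipschitzOnWith_univUnitBall hΩb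
  have := FiniteDimensional.proper ℝ (X →L[ℝ] ℝ)
  obtain ⟨a, hreg, hpert, haτ⟩ := (Measure.dense_of_ae (μ := Measure.addHaar)
    (ae_ae_fderiv_smoothApprox_ne_zero (μ := μ) (Γ := frontier Ω) hE hδ.1 ρ)).inter_nhds_nonempty
      (((tendsto_nonlocalVariation_dual_comp (μ := μ) hΩ hΩb hL hβ).eventually_le_const hτ₃).and
        (closedBall_mem_nhds 0 hτ))
  refine ⟨δ, hδ.1, ρ, a, by linarith [hδ.2], hr.2, by simp only [ρ]; linarith,
    mem_closedBall_zero_iff.1 haτ, hreg,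
    (nonlocalVariation_smoothApprox_le hβ₀ hΩ hE hδ.1 hr.2 a).trans ?_⟩
  have hsum : ENNReal.ofReal τ =
      ENNReal.ofReal (τ / 3) + ENNReal.ofReal (τ / 3) + ENNReal.ofReal (τ / 3) := by
    rw [← ENNReal.ofReal_add, ← ENNReal.ofReal_add] <;> first | positivity | (congr 1; ring)
  rw [hsum, ← add_assoc, ← add_assoc]
  gcongr
  exact hcut hδ.1

end ExistsSmoothApprox

/-- Smooth functions `v k` whose energy with respect to `m` asymptotically does not exceed the
`m`-perimeter of `E`, which converge to the indicator of `E` almost everywhere, and at rate `ε k`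
away from `Γ` and `∂E`. -/
structure IsSmoothApprox {X : Type*} [NormedAddCommGroup X] [NormedSpace ℝ X] [MeasurableSpace X]
    (μ : Measure X) (m : Measure (X × X)) (E Γ : Set X) (v : ℕ → X → ℝ) (ε : ℕ → ℝ) : Prop where
  contDiff : ∀ k, ContDiff ℝ (⊤ : ℕ∞) (v k)
  ae_fderiv_ne_zero : ∀ k, ∀ᵐ t : ℝ, ∀ x, v k x = t → fderiv ℝ (v k) x ≠ 0
  pos : ∀ k, 0 < ε k
  tendsto_zero : Tendsto ε atTop (𝓝 0)
  abs_sub_indicator_le : ∀ k, ∀ x ∉ thickening (ε k) Γ, x ∉ thickening (ε k) (frontier E) →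
    |v k x - E.indicator 1 x| ≤ ε k
  ae_tendsto : ∀ᵐ x ∂μ, Tendsto (v · x) atTop (𝓝 (E.indicator 1 x))
  nonlocalVariation_le : ∀ k,
    nonlocalVariation m (v k) ≤ nonlocalPerimeter m E + ENNReal.ofReal (ε k)

section Existence

open OpenPartialHomeomorph (univUnitBall)
open Module (finrank)

variable {X : Type*} [NormedAddCommGroup X] [InnerProductSpace ℝ X] [FiniteDimensional ℝ X]
  [MeasurableSpace X] [BorelSpace X] {μ : Measure X} [μ.IsAddHaarMeasure] {E Ω Γ : Set X}
  {β θ : ℝ}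

theorem ae_tendsto_smoothApprox (hE : MeasurableSet E) (hΓ : IsClosed Γ) (hΓ₀ : μ Γ = 0)
    {δ : ℕ → ℝ} (hδ : ∀ k, 0 < δ k) (hδ₀ : Tendsto δ atTop (𝓝 0))
    {ρ : ℕ → ContDiffBump (0 : X)} (hρδ : ∀ k, (ρ k).rOut ≤ δ k)
    (hρ : ∀ k, (ρ k).rOut ≤ 2 * (ρ k).rIn) {a : ℕ → X →L[ℝ] ℝ} (ha : Tendsto a atTop (𝓝 0)) :
    ∀ᵐ x ∂μ, Tendsto (fun k => smoothApprox μ E Γ (hδ k) (ρ k) (a k) x) atTop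
      (𝓝 (E.indicator 1 x)) := by
  have hρ₀ : Tendsto (fun k => (ρ k).rOut) atTop (𝓝 0) :=
    squeeze_zero (fun k => (ρ k).rOut_pos.le) hρδ hδ₀
  have hχ : LocallyIntegrable (E.indicator (1 : X → ℝ)) μ :=
    locallyIntegrable_of_mem_Icc (measurable_one.indicator hE) (indicator_one_mem_Icc E)
  filter_upwards [ContDiffBump.ae_convolution_tendsto_right_of_locallyIntegrable hρ₀
    (Eventually.of_forall hρ) hχ, measure_eq_zero_iff_ae_notMem.1 hΓ₀] with x hconv hxΓ
  have hpert : Tendsto (fun k => a k (univUnitBall x)) atTop (𝓝 0) :=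
    squeeze_zero_norm (fun k => abs_apply_univUnitBall_le (a k) x) (by simpa using ha.norm)
  have hfar : ∀ᶠ k in atTop, x ∉ thickening (3 * δ k) Γ := by
    have hlim : Tendsto (fun k => 3 * δ k) atTop (𝓝 0) := by simpa using hδ₀.const_mul 3
    exact hlim.eventually (eventually_notMem_thickening_of_infEDist_pos (by rwa [hΓ.closure_eq]))
  rw [← sub_zero (E.indicator 1 x)]
  refine (hconv.sub hpert).congr' ?_
  filter_upwards [hfar] with k hk
  exact (smoothApprox_eq_of_notMem_thickening (hδ k) (hρδ k) hk).symm

theorem exists_isSmoothApprox (hΩ : MeasurableSet Ω) (hΩb : IsBounded Ω)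
    (hΓ : FiniteMinkowskiContent μ θ (frontier Ω)) (hθ : 0 < θ) (hβ₀ : β ≤ 0)
    (hβθ : -(finrank ℝ X + θ) < β) (hβ : -(finrank ℝ X + 1) < β) (hE : MeasurableSet E) :
    ∃ v ε, IsSmoothApprox μ ((rieszMeasure μ β).restrict (Ω ×ˢ Ω)) E (frontier Ω) v ε := by
  let ε : ℕ → ℝ := fun k => 1 / (k + 1)
  have hε : ∀ k, 0 < ε k := fun k => Nat.one_div_pos_of_nat
  have hε₀ : Tendsto ε atTop (𝓝 0) := tendsto_one_div_add_atTop_nhds_zero_nat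
  choose δ hδ ρ a hδε hρδ hρ haε hreg hvar using fun k =>
    exists_nonlocalVariation_smoothApprox_le hΩ hΩb hΓ hθ hβ₀ hβθ hβ hE (hε k)
  have hδ₀ : Tendsto δ atTop (𝓝 0) :=
    squeeze_zero (fun k => (hδ k).le) (fun k => by linarith [hδ k, hδε k]) hε₀
  refine ⟨_, ε, fun k => contDiff_smoothApprox hE (hδ k) (ρ k) (a k), hreg, hε, hε₀,
    fun k x hxΓ hxE => ?_, ae_tendsto_smoothApprox hE isClosed_frontier (hΓ.measure_eq_zero hθ) hδ
      hδ₀ hρδ hρ (squeeze_zero_norm haε hε₀), hvar⟩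
  exact (abs_smoothApprox_sub_indicator_le (hδ k) (hρδ k)
    (fun h => hxΓ (thickening_mono (hδε k) _ h))
    (fun h => hxE (thickening_mono (hδε k) _ h))).trans (haε k)

end Existence

namespace IsSmoothApprox

variable {X : Type*} [NormedAddCommGroup X] [NormedSpace ℝ X] [MeasurableSpace X]
  {μ : Measure X} {m : Measure (X × X)} {E Γ : Set X} {v : ℕ → X → ℝ} {ε : ℕ → ℝ}

theorem comp (h : IsSmoothApprox μ m E Γ v ε) {φ : ℕ → ℕ} (hφ : Tendsto φ atTop atTop) :
    IsSmoothApprox μ m E Γ (v ∘ φ) (ε ∘ φ) where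
  contDiff k := h.contDiff (φ k)
  ae_fderiv_ne_zero k := h.ae_fderiv_ne_zero (φ k)
  pos k := h.pos (φ k)
  tendsto_zero := h.tendsto_zero.comp hφ
  abs_sub_indicator_le k := h.abs_sub_indicator_le (φ k)
  ae_tendsto := h.ae_tendsto.mono fun _ hx => hx.comp hφ
  nonlocalVariation_le k := h.nonlocalVariation_le (φ k)

theorem measurableSet_superlevel [OpensMeasurableSpace X] (h : IsSmoothApprox μ m E Γ v ε)
    (t : ℝ) (k : ℕ) : MeasurableSet {x | t < v k x} :=
  measurableSet_lt measurable_const (h.contDiff k).continuous.measurable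

theorem liminf_nonlocalVariation_le (h : IsSmoothApprox μ m E Γ v ε) :
    liminf (fun k => nonlocalVariation m (v k)) atTop ≤ nonlocalPerimeter m E := by
  have hlim : Tendsto (fun k => nonlocalPerimeter m E + ENNReal.ofReal (ε k)) atTop
      (𝓝 (nonlocalPerimeter m E)) := by
    simpa using tendsto_const_nhds.add (ENNReal.tendsto_ofReal h.tendsto_zero)
  exact (liminf_le_liminf (Eventually.of_forall h.nonlocalVariation_le)).trans_eq hlim.liminf_eq

theorem pairwiseAETendstoIndicator (h : IsSmoothApprox μ m E Γ v ε)
    (hm : m ≪ μ.prod μ) : PairwiseAETendstoIndicator m v E :=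
  hm.ae_le ((Measure.quasiMeasurePreserving_fst.ae h.ae_tendsto).and
    (Measure.quasiMeasurePreserving_snd.ae h.ae_tendsto))

theorem ae_eventually_lt_iff_mem (h : IsSmoothApprox μ m E Γ v ε) {t : ℝ} (ht : t ∈ Ioo 0 1) :
    ∀ᵐ x ∂μ, ∀ᶠ k in atTop, t < v k x ↔ x ∈ E :=
  h.ae_tendsto.mono fun _ hx => eventually_lt_iff_mem_of_tendsto_indicator hx ht

theorem frontier_superlevel_diff_subset (h : IsSmoothApprox μ m E Γ v ε) {t : ℝ} {k : ℕ}
    (hεt : ε k < t) (hεt' : ε k < 1 - t) :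
    frontier {x | t < v k x} \ thickening (ε k) Γ ⊆ thickening (ε k) (frontier E) := by
  rintro x ⟨hx, hxΓ⟩
  by_contra hxE
  have hvt : t = v k x := frontier_lt_subset_eq continuous_const (h.contDiff k).continuous hx
  have hle := abs_le.1 (h.abs_sub_indicator_le k x hxΓ hxE)
  rw [← hvt] at hle
  by_cases hE : x ∈ E
  · rw [indicator_of_mem hE, Pi.one_apply] at hle
    linarith [hle.1]
  · rw [indicator_of_notMem hE] at hle
    linarith [hle.2]

/-- By the coarea formula, some superlevel sets do as well as `v` itself. -/
theorem exists_superlevel [SFinite m] [OpensMeasurableSpace X]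
    (h : IsSmoothApprox μ m E Γ v ε) (hm : m ≪ μ.prod μ) (hE : MeasurableSet E)
    (hEfin : nonlocalPerimeter m E < ⊤) :
    ∃ t ∈ Ioo (0 : ℝ) 1, ∃ v' ε', IsSmoothApprox μ m E Γ v' ε' ∧
      (∀ k x, v' k x = t → fderiv ℝ (v' k) x ≠ 0) ∧ (∀ k, ε' k < t ∧ ε' k < 1 - t) ∧
      Tendsto (fun k => nonlocalPerimeter m {x | t < v' k x}) atTop
        (𝓝 (nonlocalPerimeter m E)) := by
  obtain ⟨t, ht, hreg, φ, hφ, hper⟩ := exists_tendsto_nonlocalPerimeter_superlevel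
    (fun k => (h.contDiff k).continuous.measurable) hE (h.pairwiseAETendstoIndicator hm) hEfin
    h.liminf_nonlocalVariation_le (ae_all_iff.2 h.ae_fderiv_ne_zero)
  have hsmall : ∀ᶠ k in atTop, ε (φ k) < t ∧ ε (φ k) < 1 - t :=
    hφ.eventually ((h.tendsto_zero.eventually_lt_const ht.1).and
      (h.tendsto_zero.eventually_lt_const (sub_pos.2 ht.2)))
  obtain ⟨N, hN⟩ := eventually_atTop.1 hsmall
  have hN_top : Tendsto (· + N) atTop atTop := tendsto_add_atTop_nat N
  exact ⟨t, ht, _, _, h.comp (hφ.comp hN_top), fun k => hreg _, fun k => hN _ (Nat.le_add_left N k),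
    hper.comp hN_top⟩

end IsSmoothApprox

/-! ### The fractional perimeter -/

section AEConvergence

variable {X : Type*} [MeasurableSpace X] {μ : Measure X} {A : ℕ → Set X} {E : Set X}

theorem tendsto_nonlocalPerimeter_of_ae_eventually_mem_iff {m : Measure (X × X)}
    [IsFiniteMeasure m] (hm : m ≪ μ.prod μ) (hA : ∀ k, MeasurableSet (A k))
    (hE : MeasurableSet E) (h : ∀ᵐ x ∂μ, ∀ᶠ k in atTop, x ∈ A k ↔ x ∈ E) :
    Tendsto (fun k => nonlocalPerimeter m (A k)) atTop (𝓝 (nonlocalPerimeter m E)) := by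
  refine tendsto_measure_of_ae_tendsto_indicator_of_isFiniteMeasure atTop (hE.prod hE.compl)
    (fun k => (hA k).prod (hA k).compl) (hm.ae_le ?_)
  filter_upwards [Measure.quasiMeasurePreserving_fst.ae h,
    Measure.quasiMeasurePreserving_snd.ae h] with p h₁ h₂
  filter_upwards [h₁, h₂] with k hk₁ hk₂
  exact and_congr hk₁ (not_congr hk₂)

theorem tendsto_measure_symmDiff_inter_of_ae_eventually_mem_iff (hA : ∀ k, MeasurableSet (A k))
    (hE : MeasurableSet E) (h : ∀ᵐ x ∂μ, ∀ᶠ k in atTop, x ∈ A k ↔ x ∈ E) {K : Set X}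
    (hK : μ K ≠ ⊤) : Tendsto (fun k => μ ((A k ∆ E) ∩ K)) atTop (𝓝 0) := by
  have hfin : IsFiniteMeasure (μ.restrict K) := isFiniteMeasure_restrict.2 hK
  have hlim := tendsto_measure_of_ae_tendsto_indicator_of_isFiniteMeasure (μ := μ.restrict K) atTop
    MeasurableSet.empty (fun k => (hA k).symmDiff hE)
    (ae_restrict_of_ae (h.mono fun x hx => hx.mono fun k hk => by
      simp only [mem_symmDiff, hk, and_not_self, or_self, mem_empty_iff_false]))
  simpa only [measure_empty, Measure.restrict_apply ((hA _).symmDiff hE)] using hlim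

end AEConvergence

section FractionalPerimeter

variable {n : ℕ} {s θ : ℝ} {A : ℕ → Set (EuclideanSpace ℝ (Fin n))}
  {E Ω : Set (EuclideanSpace ℝ (Fin n))}

theorem Ls_eq_rieszMeasure {A B : Set (EuclideanSpace ℝ (Fin n))} (hA : MeasurableSet A)
    (hB : MeasurableSet B) : Ls n s A B = rieszMeasure volume (-(n + s)) (A ×ˢ B) :=
  (rieszMeasure_prod hA hB).symm

theorem Ps_eq_nonlocalPerimeter (hE : MeasurableSet E) (hΩ : MeasurableSet Ω) :
    Ps n s E Ω =
      nonlocalPerimeter ((rieszMeasure volume (-(n + s))).restrict (Ω ×ˢ Ω)) E +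
      nonlocalPerimeter ((rieszMeasure volume (-(n + s))).restrict (Ω ×ˢ Ωᶜ)) E +
      nonlocalPerimeter ((rieszMeasure volume (-(n + s))).restrict (Ωᶜ ×ˢ Ω)) E := by
  simp only [Ps, nonlocalPerimeter, Measure.restrict_apply (hE.prod hE.compl), prod_inter_prod,
    Ls_eq_rieszMeasure (hE.inter hΩ) (hE.compl.inter hΩ), sdiff_eq,
    Ls_eq_rieszMeasure (hE.inter hΩ) (hE.compl.inter hΩ.compl),
    Ls_eq_rieszMeasure (hE.inter hΩ.compl) (hE.compl.inter hΩ)]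

theorem rieszMeasure_euclideanSpace_prod_compl_lt_top (hs : 0 < s) (hsθ : s < θ)
    (hΩ : MeasurableSet Ω) (hΩb : IsBounded Ω)
    (hΓ : FiniteMinkowskiContent volume θ (frontier Ω)) :
    rieszMeasure volume (-(n + s)) (Ω ×ˢ Ωᶜ) < ⊤ := by
  refine rieszMeasure_prod_compl_lt_top hΩ hΩb.measure_lt_top hΓ ?_ ?_ <;>
    rw [finrank_euclideanSpace_fin] <;> linarith

theorem tendsto_Ps_of_ae_eventually_mem_iff (hs : 0 < s) (hsθ : s < θ)
    (hΩ : MeasurableSet Ω) (hΩb : IsBounded Ω)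
    (hΓ : FiniteMinkowskiContent volume θ (frontier Ω)) (hA : ∀ k, MeasurableSet (A k))
    (hE : MeasurableSet E) (h : ∀ᵐ x, ∀ᶠ k in atTop, x ∈ A k ↔ x ∈ E)
    (hint : Tendsto (fun k =>
        nonlocalPerimeter ((rieszMeasure volume (-(n + s))).restrict (Ω ×ˢ Ω)) (A k)) atTop
      (𝓝 (nonlocalPerimeter ((rieszMeasure volume (-(n + s))).restrict (Ω ×ˢ Ω)) E))) :
    Tendsto (fun k => Ps n s (A k) Ω) atTop (𝓝 (Ps n s E Ω)) := by
  have hfin := rieszMeasure_euclideanSpace_prod_compl_lt_top hs hsθ hΩ hΩb hΓ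
  have h₁ : IsFiniteMeasure ((rieszMeasure volume (-(n + s))).restrict (Ω ×ˢ Ωᶜ)) :=
    isFiniteMeasure_restrict.2 hfin.ne
  have h₂ : IsFiniteMeasure ((rieszMeasure volume (-(n + s))).restrict (Ωᶜ ×ˢ Ω)) :=
    isFiniteMeasure_restrict.2 (by rw [rieszMeasure_prod_comm hΩ.compl hΩ]; exact hfin.ne)
  simp only [Ps_eq_nonlocalPerimeter (hA _) hΩ, Ps_eq_nonlocalPerimeter hE hΩ]
  exact (hint.add (tendsto_nonlocalPerimeter_of_ae_eventually_mem_iff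
    (rieszMeasure_restrict_absolutelyContinuous _) hA hE h)).add
    (tendsto_nonlocalPerimeter_of_ae_eventually_mem_iff
    (rieszMeasure_restrict_absolutelyContinuous _) hA hE h)

theorem exists_isSmoothApprox_tendsto_Ps_superlevel (hs : s ∈ Ioo (0 : ℝ) 1) (hsθ : s < θ)
    (hΩ : MeasurableSet Ω) (hΩb : IsBounded Ω)
    (hΓ : FiniteMinkowskiContent volume θ (frontier Ω)) (hE : MeasurableSet E)
    (hfin : Ps n s E Ω < ⊤) :
    ∃ t ∈ Ioo (0 : ℝ) 1, ∃ v ε,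
      IsSmoothApprox volume ((rieszMeasure volume (-(n + s))).restrict (Ω ×ˢ Ω)) E
        (frontier Ω) v ε ∧
      (∀ k x, v k x = t → fderiv ℝ (v k) x ≠ 0) ∧ (∀ k, ε k < t ∧ ε k < 1 - t) ∧
      Tendsto (fun k => Ps n s {x | t < v k x} Ω) atTop (𝓝 (Ps n s E Ω)) := by
  obtain ⟨v₀, ε₀, hv₀⟩ := exists_isSmoothApprox (μ := volume) (β := -(n + s)) hΩ hΩb hΓ
    (hs.1.trans hsθ) (by linarith [hs.1, n.cast_nonneg (α := ℝ)])
    (by rw [finrank_euclideanSpace_fin]; linarith)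
    (by rw [finrank_euclideanSpace_fin]; linarith [hs.2]) hE
  have hperE : nonlocalPerimeter ((rieszMeasure volume (-(n + s))).restrict (Ω ×ˢ Ω)) E < ⊤ := by
    rw [Ps_eq_nonlocalPerimeter hE hΩ] at hfin
    exact (le_self_add.trans le_self_add).trans_lt hfin
  obtain ⟨t, ht, v, ε, hv, hreg, hεt, hper⟩ :=
    hv₀.exists_superlevel (rieszMeasure_restrict_absolutelyContinuous _) hE hperE
  exact ⟨t, ht, v, ε, hv, hreg, hεt, tendsto_Ps_of_ae_eventually_mem_iff hs.1 hsθ hΩ hΩb hΓ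
    (hv.measurableSet_superlevel t) hE (hv.ae_eventually_lt_iff_mem ht) hper⟩

end FractionalPerimeter

theorem exists_iSup_add_lt_top_of_tendsto {u : ℕ → ℝ≥0∞} {a : ℝ≥0∞} (hu : Tendsto u atTop (𝓝 a))
    (ha : a < ⊤) : ∃ N, ⨆ k, u (k + N) < ⊤ := by
  obtain ⟨c, hac, hc⟩ := exists_between ha
  obtain ⟨N, hN⟩ := eventually_atTop.1 (hu.eventually_le_const hac)
  exact ⟨N, (iSup_le fun k => hN _ (Nat.le_add_left N k)).trans_lt hc⟩

theorem approximation_in_bounded_lipschitz_open_set_general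
    {n : ℕ} {s θ : ℝ} (hs : s ∈ Ioo (0 : ℝ) 1) (hsθ : s < θ)
    {Ω : Set (EuclideanSpace ℝ (Fin n))} (hΩ : MeasurableSet Ω) (hΩb : IsBounded Ω)
    (hΓ : FiniteMinkowskiContent volume θ (frontier Ω))
    {E : Set (EuclideanSpace ℝ (Fin n))} (hE : MeasurableSet E) :
    Ps n s E Ω < ⊤
      ↔ ∃ (Eh : ℕ → Set (EuclideanSpace ℝ (Fin n))) (ε : ℕ → ℝ),
          (∀ h, HasSmoothBoundary (Eh h)) ∧
          (∀ h, 0 < ε h) ∧ Tendsto ε atTop (𝓝 0) ∧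
          LocConv n Eh E ∧ (⨆ h, Ps n s (Eh h) Ω) < ⊤ ∧
          Tendsto (fun h => Ps n s (Eh h) Ω) atTop (𝓝 (Ps n s E Ω)) ∧
          (∀ h, frontier (Eh h) \ thickening (ε h) (frontier Ω)
            ⊆ thickening (ε h) (frontier E)) := by
  refine ⟨fun hfin => ?_, fun ⟨Eh, _, _, _, _, _, hsup, hlim, _⟩ =>
    (le_of_tendsto' hlim fun h => le_iSup (fun h => Ps n s (Eh h) Ω) h).trans_lt hsup⟩
  obtain ⟨t, ht, v, ε, hv, hreg, hεt, hlim⟩ :=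
    exists_isSmoothApprox_tendsto_Ps_superlevel hs hsθ hΩ hΩb hΓ hE hfin
  obtain ⟨N, hN⟩ := exists_iSup_add_lt_top_of_tendsto hlim hfin
  have hN_top := tendsto_add_atTop_nat N
  refine ⟨fun k => {x | t < v (k + N) x}, fun k => ε (k + N),
    fun k => ⟨v (k + N), t, hv.contDiff _, hreg _, rfl⟩, fun k => hv.pos _,
    hv.tendsto_zero.comp hN_top, fun K hK => ?_, hN, hlim.comp hN_top,
    fun k => hv.frontier_superlevel_diff_subset (hεt _).1 (hεt _).2⟩
  exact (tendsto_measure_symmDiff_inter_of_ae_eventually_mem_iff (hv.measurableSet_superlevel t)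
    hE (hv.ae_eventually_lt_iff_mem ht) hK.measure_lt_top.ne).comp hN_top

/-- Theorem 1.3: in a bounded open set `Ω` with Lipschitz boundary, a set `E`
has finite `s`-perimeter in `Ω` iff it can be approximated by smooth open sets with convergence
of the `s`-perimeters in `Ω` and uniform convergence of the boundaries away from `∂Ω`. -/
theorem approximation_in_bounded_lipschitz_open_set
    (n : ℕ) (hn : 1 ≤ n) (s : ℝ) (hs : s ∈ Set.Ioo (0 : ℝ) 1)
    (Ω : Set (EuclideanSpace ℝ (Fin n))) (hΩo : IsOpen Ω) (hΩb : IsBounded Ω)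
    (hΩlip : HasLipschitzBoundary Ω)
    (E : Set (EuclideanSpace ℝ (Fin n))) (hE : MeasurableSet E)
    (hEnorm : frontier E = mtBoundary E) :
    Ps n s E Ω < ⊤
      ↔ ∃ (Eh : ℕ → Set (EuclideanSpace ℝ (Fin n))) (ε : ℕ → ℝ),
          (∀ h, HasSmoothBoundary (Eh h)) ∧
          (∀ h, 0 < ε h) ∧ Tendsto ε atTop (𝓝 0) ∧
          -- (i)
          LocConv n Eh E ∧ (⨆ h, Ps n s (Eh h) Ω) < ⊤ ∧
          -- (ii)
          Tendsto (fun h => Ps n s (Eh h) Ω) atTop (𝓝 (Ps n s E Ω)) ∧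
          -- (iii)
          (∀ h, frontier (Eh h) \ Metric.thickening (ε h) (frontier Ω)
            ⊆ Metric.thickening (ε h) (frontier E)) :=
  approximation_in_bounded_lipschitz_open_set_general hs hs.2 hΩo.measurableSet hΩb
    (hΩlip.finiteMinkowskiContent hΩb) hE
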